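/- arXiv:2311.09864 — 3 statements merged into one kernel-verified Lean document; each statement's English description precedes it below -/
import Mathlib

section
/- Let n ≥ 3 and let φ : M_n(ℂ) → M_n(ℂ) be a continuous map which preserves commutativity and spectrum. Then there exists an invertible matrix T ∈ M_n(ℂ) such that either φ(X) = T X T⁻¹ for all X ∈ M_n(ℂ), or φ(X) = T Xᵗ T⁻¹ for all X ∈ M_n(ℂ). -/
open Matrix

noncomputable section

/-!
Fix `e` with distinct entries. The matrix `φ (diagonal e)` has the eigenvalues of `diagonal e`, so
after a conjugation `φ` fixes it, and then maps diagonal matrices to diagonal matrices. Their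
eigenvalues can only be permuted, and by connectedness they are not, so `φ` fixes every diagonal
matrix. Applied to `φ ∘ conjAut S`, this says that `φ` acts on each algebra `S D S⁻¹`, with `D` the
diagonal matrices, as a conjugation depending on `S`. Hence, by density of diagonalizable matrices,
`φ` is homogeneous and preserves squares, and it is additive on orthogonal idempotents.

Write `x fᵗ` for `vecMulVec x f`. If `f x = g y = 1` and `f y = g x = 0`, then
`x fᵗ + y gᵗ = x (f + g)ᵗ + (y - x) gᵗ` are two splittings of one idempotent, so
`φ (x (f + g)ᵗ) - φ (x fᵗ)` depends only on `x`, `y` and `g`. This makes `f ↦ φ (x fᵗ)` additive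
along independent directions in the hyperplane annihilating `x`. In size at least three the
hyperplane has dimension at least two, which removes the independence condition; homogeneity and
continuity then give full additivity in `f`. So `φ` is linear on rank-one matrices, hence linear,
and is a Jordan map fixing the diagonal up to a conjugation. Such a map sends `E_ij` to a multiple
of `E_ij` for all `i ≠ j`, or of `E_ji` for all `i ≠ j`.
-/

theorem eq_of_forall_exists_eq {X Y κ : Type*} [TopologicalSpace X] [PreconnectedSpace X]
    [TopologicalSpace Y] [T2Space Y] [Finite κ] {f : X → Y} {p : κ → X → Y} (hf : Continuous f)
    (hp : ∀ j, Continuous (p j)) (hinj : ∀ x, Function.Injective fun j => p j x)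
    (hmem : ∀ x, ∃ j, f x = p j x) {i : κ} {x₀ : X} (h₀ : f x₀ = p i x₀) : f = p i := by
  have hclosed (j : κ) : IsClosed {x | f x = p j x} := isClosed_eq hf (hp j)
  have hcompl : {x | f x = p i x}ᶜ = ⋃ j ∈ {j | j ≠ i}, {x | f x = p j x} := by
    ext x
    simp only [Set.mem_compl_iff, Set.mem_ofPred_eq, Set.mem_iUnion, exists_prop]
    refine ⟨fun hx => ?_, fun ⟨j, hji, hj⟩ hi => hji (hinj x (hj.symm.trans hi))⟩
    obtain ⟨j, hj⟩ := hmem x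
    exact ⟨j, fun hji => hx (hji ▸ hj), hj⟩
  have hopen : IsOpen {x | f x = p i x} := by
    rw [← isClosed_compl_iff, hcompl]
    exact (Set.toFinite _).isClosed_biUnion fun j _ => hclosed j
  have huniv := IsClopen.eq_univ ⟨hclosed i, hopen⟩ ⟨x₀, h₀⟩
  exact funext fun x => huniv.ge (Set.mem_univ x)

theorem finite_not_injective_lineMap {K κ : Type*} [Field K] [Finite κ] {e : κ → K}
    (he : Function.Injective e) (d : κ → K) :
    {z : K | ¬ Function.Injective (AffineMap.lineMap e d z : κ → K)}.Finite := by
  refine (Set.finite_range fun q : κ × κ =>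
    (e q.1 - e q.2) / ((e q.1 - e q.2) - (d q.1 - d q.2))).subset fun z hz => ?_
  obtain ⟨i, j, hij, hne⟩ := Function.not_injective_iff.mp hz
  simp only [AffineMap.lineMap_apply, vsub_eq_sub, vadd_eq_add, Pi.add_apply, Pi.smul_apply,
    Pi.sub_apply, smul_eq_mul] at hij
  have hz' : z * ((e i - e j) - (d i - d j)) = e i - e j := by linear_combination -hij
  have he' : e i - e j ≠ 0 := sub_ne_zero.mpr (he.ne hne)
  have hden : (e i - e j) - (d i - d j) ≠ 0 := fun h => he' (by rw [← hz', h, mul_zero])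
  exact ⟨(i, j), (eq_div_of_mul_eq hden hz').symm⟩

section Conjugation

/-- Conjugation by the units of an algebra, as a homomorphism into its automorphism group. -/
def conjAut (R A : Type*) [CommSemiring R] [Semiring A] [Algebra R A] : Aˣ →* A ≃ₐ[R] A :=
  (MulSemiringAction.toAlgAut (ConjAct Aˣ) R A).comp ConjAct.toConjAct.toMonoidHom

theorem conjAut_apply {R A : Type*} [CommSemiring R] [Semiring A] [Algebra R A] (S : Aˣ) (X : A) :
    conjAut R A S X = S * X * ↑S⁻¹ :=
  rfl

variable {ι K : Type*} [Fintype ι] [DecidableEq ι]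

/-- The embedding `d ↦ S diag(d) S⁻¹` of `K^ι` as the conjugate by `S` of the algebra of diagonal
matrices. -/
def conjDiagonal [CommRing K] (S : (Matrix ι ι K)ˣ) : (ι → K) →ₐ[K] Matrix ι ι K :=
  (conjAut K _ S).toAlgHom.comp (diagonalAlgHom K)

theorem conjDiagonal_apply [CommRing K] (S : (Matrix ι ι K)ˣ) (d : ι → K) :
    conjDiagonal S d = conjAut K _ S (diagonal d) :=
  rfl

theorem conjDiagonal_single_one [CommRing K] (S : (Matrix ι ι K)ˣ) (i : ι) :
    conjDiagonal S (Pi.single i 1) = vecMulVec (S.val.col i) (S⁻¹.val.row i) := by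
  ext a b
  rw [conjDiagonal_apply, conjAut_apply, mul_apply]
  simp [mul_diagonal, vecMulVec_apply, Pi.single_apply]

variable [Field K] {A : Matrix ι ι K} {d : ι → K}

theorem exists_conjDiagonal_eq_of_linearIndependent {v : ι → ι → K}
    (hv : LinearIndependent K v) (hA : ∀ i, A *ᵥ v i = d i • v i) :
    ∃ S, conjDiagonal S d = A := by
  have hcols : LinearIndependent K (of v)ᵀ.col := hv
  obtain ⟨S, hS⟩ := linearIndependent_cols_iff_isUnit.mp hcols
  have hAS : A * S = S * diagonal d := by
    ext i j
    have hij := congrFun (hA j) i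
    rw [mul_diagonal, hS, mul_comm]
    exact hij
  exact ⟨S, by rw [conjDiagonal_apply, conjAut_apply, ← hAS, Units.mul_inv_cancel_right]⟩

theorem exists_conjDiagonal_eq_of_injective (hd : Function.Injective d)
    (hA : ∀ i, d i ∈ spectrum K A) : ∃ S, conjDiagonal S d = A := by
  have hev (i : ι) : ∃ v, Module.End.HasEigenvector (toLin' A) (d i) v := by
    have hi := hA i
    rw [← spectrum_toLin', ← Module.End.hasEigenvalue_iff_mem_spectrum] at hi
    exact hi.exists_hasEigenvector
  choose v hv using hev
  exact exists_conjDiagonal_eq_of_linearIndependent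
    (Module.End.eigenvectors_linearIndependent' (toLin' A) d hd v hv)
    fun i => by simpa using (hv i).apply_eq_smul

variable (A) in
/-- `A` is similar to a diagonal matrix. -/
def IsDiagonalizable : Prop :=
  ∃ S d, conjDiagonal S d = A

theorem isDiagonalizable_of_squarefree_aeval_eq_zero [IsAlgClosed K] {p : Polynomial K}
    (hp : Squarefree p) (hA : Polynomial.aeval A p = 0) : IsDiagonalizable A := by
  classical
  let f : Module.End K (ι → K) := toLinAlgEquiv' A
  have hf : Polynomial.aeval f p = 0 := by
    rw [show f = (toLinAlgEquiv' : _ ≃ₐ[K] _).toAlgHom A from rfl,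
      Polynomial.aeval_algHom_apply, hA, map_zero]
  have hsemisimple := Module.End.isSemisimple_of_squarefree_aeval_eq_zero hp hf
  have hint := DirectSum.isInternal_submodule_of_iSupIndep_of_iSup_eq_top
    (Module.End.eigenspaces_iSupIndep f) hsemisimple.iSup_eigenspace_eq_top
  let v (μ : K) := Module.finBasis K (f.eigenspace μ)
  let b := hint.collectedBasis v
  let e := b.indexEquiv (Pi.basisFun K ι)
  obtain ⟨S, hS⟩ := exists_conjDiagonal_eq_of_linearIndependent (A := A)
    (d := fun i => (e.symm i).1) (b.reindex e).linearIndependent fun i => by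
      have hmem := hint.collectedBasis_mem v (e.symm i)
      rw [Module.End.mem_eigenspace_iff] at hmem
      simpa [b, f, toLinAlgEquiv'_apply] using hmem
  exact ⟨S, _, hS⟩

end Conjugation

section Density

theorem charpoly_separable_iff_resultant_ne_zero {ι K : Type*} [Fintype ι] [DecidableEq ι]
    [Field K] [CharZero K] {A : Matrix ι ι K} :
    A.charpoly.Separable ↔ Polynomial.resultant A.charpoly (Polynomial.derivative A.charpoly)
      (Fintype.card ι) (Fintype.card ι - 1) ≠ 0 := by
  have hunit := Polynomial.isUnit_resultant_iff_isCoprime (f := A.charpoly)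
    (g := Polynomial.derivative A.charpoly) A.charpoly_monic
  rwa [Polynomial.natDegree_derivative, charpoly_natDegree_eq_dim, isUnit_iff_ne_zero,
    Iff.comm] at hunit

theorem separable_charpoly_diagonal {ι K : Type*} [Fintype ι] [DecidableEq ι] [Field K]
    {d : ι → K} (hd : Function.Injective d) : (diagonal d).charpoly.Separable := by
  rw [charpoly_diagonal]
  exact Polynomial.separable_prod_X_sub_C_iff.mpr hd

theorem finite_not_separable_charpoly_lineMap {ι K : Type*} [Fintype ι] [DecidableEq ι]
    [Field K] [CharZero K] (A : Matrix ι ι K) {B : Matrix ι ι K} (hB : B.charpoly.Separable) :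
    {t : K | ¬ (AffineMap.lineMap A B t : Matrix ι ι K).charpoly.Separable}.Finite := by
  classical
  let P : Matrix ι ι (Polynomial K) :=
    AffineMap.lineMap (A.map Polynomial.C) (B.map Polynomial.C) (Polynomial.X : Polynomial K)
  let r := Polynomial.resultant P.charpoly (Polynomial.derivative P.charpoly)
    (Fintype.card ι) (Fintype.card ι - 1)
  have hP (t : K) : P.map (Polynomial.evalRingHom t) = AffineMap.lineMap A B t := by
    ext i j
    simp [P, AffineMap.lineMap_apply]
  have hr (t : K) :
      (AffineMap.lineMap A B t : Matrix ι ι K).charpoly.Separable ↔ r.eval t ≠ 0 := by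
    rw [charpoly_separable_iff_resultant_ne_zero, ← hP, charpoly_map,
      Polynomial.derivative_map, Polynomial.resultant_map_map, Polynomial.coe_evalRingHom]
  have hr₀ : r ≠ 0 := by
    rintro h
    have h₁ := (hr 1).mp (by rwa [AffineMap.lineMap_apply_one])
    simp [h] at h₁
  refine r.roots.toFinset.finite_toSet.subset fun t ht => ?_
  simpa [hr₀, hr] using ht

theorem dense_isDiagonalizable (ι K : Type*) [Fintype ι] [DecidableEq ι]
    [NontriviallyNormedField K] [CharZero K] [IsAlgClosed K] :
    Dense {A : Matrix ι ι K | IsDiagonalizable A} := by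
  intro A
  obtain ⟨e, he⟩ := exists_injective_nat ι
  let D : Matrix ι ι K := diagonal fun i => (e i : K)
  have hD : D.charpoly.Separable := separable_charpoly_diagonal (Nat.cast_injective.comp he)
  have hdense := dense_univ.sdiff_finite (finite_not_separable_charpoly_lineMap A hD)
  have hline : Continuous fun t : K => (AffineMap.lineMap A D t : Matrix ι ι K) := by
    simp only [AffineMap.lineMap_apply, vsub_eq_sub, vadd_eq_add]
    fun_prop
  rw [← AffineMap.lineMap_apply_zero (k := K) A D]
  refine closure_mono ?_ (image_closure_subset_closure_image hline ⟨0, hdense 0, rfl⟩)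
  rintro _ ⟨t, ⟨-, ht⟩, rfl⟩
  exact isDiagonalizable_of_squarefree_aeval_eq_zero
    (not_not.mp ht).squarefree (aeval_self_charpoly _)

end Density

section OrthogonalIdempotents

variable {ι K : Type*} [Fintype ι] [DecidableEq ι] [Field K] [NeZero (2 : K)]

theorem separable_X_pow_three_sub_X :
    (Polynomial.X ^ 3 - Polynomial.X : Polynomial K).Separable := by
  have hhalf : (Polynomial.C 2⁻¹ * 2 : Polynomial K) = 1 := by
    rw [← map_ofNat Polynomial.C, ← map_mul, inv_mul_cancel₀ two_ne_zero, map_one]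
  refine ⟨-9 * Polynomial.C 2⁻¹ * Polynomial.X, 3 * Polynomial.C 2⁻¹ * Polynomial.X ^ 2 - 1, ?_⟩
  simp only [map_sub, Polynomial.derivative_X_pow, Polynomial.derivative_X, map_ofNat,
    Nat.cast_ofNat]
  linear_combination (norm := ring_nf) 3 * Polynomial.X ^ 2 * hhalf

/-- `P - Q` is a root of `X ^ 3 - X`, hence diagonalizable, and `P` and `Q` are
polynomials in it. -/
theorem exists_conjDiagonal_eq_of_orthogonal [IsAlgClosed K] {P Q : Matrix ι ι K}
    (hP : P * P = P) (hQ : Q * Q = Q) (hPQ : P * Q = 0) (hQP : Q * P = 0) :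
    ∃ S p q, conjDiagonal S p = P ∧ conjDiagonal S q = Q := by
  have hsq : (P - Q) * (P - Q) = P + Q := by
    simp only [mul_sub, sub_mul, hP, hQ, hPQ, hQP]
    abel
  have hcube : (P - Q) ^ 3 = P - Q := by
    rw [pow_succ, sq, hsq]
    simp only [mul_sub, add_mul, hP, hQ, hPQ, hQP]
    abel
  obtain ⟨S, d, hd⟩ := isDiagonalizable_of_squarefree_aeval_eq_zero
    (separable_X_pow_three_sub_X (K := K)).squarefree (A := P - Q) (by simp [hcube])
  have hhalf (X : Matrix ι ι K) : (2 : K)⁻¹ • (X + X) = X := by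
    rw [← two_smul K X, inv_smul_smul₀ two_ne_zero]
  refine ⟨S, (2 : K)⁻¹ • (d * d + d), (2 : K)⁻¹ • (d * d - d), ?_, ?_⟩
  · rw [map_smul, map_add, map_mul, hd, hsq, add_add_sub_cancel, hhalf]
  · rw [map_smul, map_sub, map_mul, hd, hsq, add_sub_sub_cancel, hhalf]

end OrthogonalIdempotents

section Additivity

theorem map_add_of_forall_notMem_span {K V G : Type*} [Field K] [AddCommGroup V] [Module K V]
    [AddCommGroup G] (hV : 1 < Module.finrank K V) {w : V → G}
    (hw : ∀ k g, g ∉ Submodule.span K {k} → w (k + g) = w k + w g) (k g : V) :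
    w (k + g) = w k + w g := by
  by_cases hgk : g ∈ Submodule.span K {k}
  · obtain ⟨h, hh⟩ : ∃ h, h ∉ Submodule.span K {k} := by
      by_contra! htop
      have hle : Module.finrank K V ≤ 1 := by
        rw [← finrank_top K V, ← Submodule.eq_top_iff'.mpr htop]
        simpa using finrank_span_le_card (R := K) {k}
      exact hV.not_ge hle
    have hnot {v : V} (hv : v ∈ Submodule.span K {k}) : h ∉ Submodule.span K {v} :=
      fun hmem => hh ((Submodule.span_singleton_le_iff_mem v _).mpr hv hmem)
    have hkg : k + g ∈ Submodule.span K {k} :=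
      Submodule.add_mem _ (Submodule.mem_span_singleton_self k) hgk
    have hgh : g + h ∉ Submodule.span K {k} := by rwa [Submodule.add_mem_iff_right _ hgk]
    apply add_right_cancel (b := w h)
    calc w (k + g) + w h = w (k + (g + h)) := by rw [← hw _ _ (hnot hkg), add_assoc]
      _ = w k + w g + w h := by rw [hw _ _ hgh, hw _ _ (hnot hgk), add_assoc]
  · exact hw k g hgk

variable {𝕜 E F : Type*} [RCLike 𝕜] [AddCommGroup E] [Module 𝕜 E] [TopologicalSpace E]
  [ContinuousAdd E] [ContinuousSMul 𝕜 E] [AddCommGroup F] [Module 𝕜 F] [TopologicalSpace F]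
  [IsTopologicalAddGroup F] [T2Space F] {u : E → F}

/-- By homogeneity, `u (f / N + k) - u (f / N)` does not depend on `N`; let `N → ∞`. -/
theorem eq_apply_of_forall_map_add_nsmul (hu : Continuous u)
    (hsmul : ∀ (c : 𝕜) x, u (c • x) = c • u x) {f k : E} {b : F}
    (hb : ∀ N : ℕ, u (f + N • k) = u f + N • b) : b = u k := by
  let c (N : ℕ) : 𝕜 := (N : 𝕜)⁻¹
  have hconst (N : ℕ) : u (c (N + 1) • f + k) - u (c (N + 1) • f) = b := by
    have hN : ((N + 1 : ℕ) : 𝕜) ≠ 0 := Nat.cast_ne_zero.mpr N.succ_ne_zero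
    have hscale : c (N + 1) • (f + (N + 1) • k) = c (N + 1) • f + k := by
      rw [smul_add, ← Nat.cast_smul_eq_nsmul 𝕜, inv_smul_smul₀ hN]
    rw [← hscale, hsmul, hsmul, hb, smul_add, add_sub_cancel_left, ← Nat.cast_smul_eq_nsmul 𝕜,
      inv_smul_smul₀ hN]
  have hcont : Continuous fun t : 𝕜 => u (t • f + k) - u (t • f) := by fun_prop
  have hlim := (hcont.tendsto 0).comp
    ((tendsto_inv_atTop_nhds_zero_nat (𝕜 := 𝕜)).comp (Filter.tendsto_add_atTop_nat 1))
  have hu₀ : u 0 = 0 := by simpa using hsmul 0 0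
  simp only [Function.comp_def, c, hconst, zero_smul, zero_add, hu₀, sub_zero] at hlim
  exact tendsto_const_nhds_iff.mp hlim

theorem map_add_of_affine_on_hyperplane (hu : Continuous u)
    (hsmul : ∀ (c : 𝕜) x, u (c • x) = c • u x) {ℓ : Module.Dual 𝕜 E} {f : E} (hf : ℓ f = 1)
    (w : LinearMap.ker ℓ →+ F) (hw : ∀ k : LinearMap.ker ℓ, u (f + k) = u f + w k) (p q : E) :
    u (p + q) = u p + u q := by
  have hwu (k : LinearMap.ker ℓ) : w k = u k :=
    eq_apply_of_forall_map_add_nsmul hu hsmul (f := f) fun N => by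
      rw [← map_nsmul, ← hw, Submodule.coe_smul_of_tower]
  have hline (c : 𝕜) (k : LinearMap.ker ℓ) : u (c • f + k) = c • u f + w k := by
    obtain rfl | hc := eq_or_ne c 0
    · simp [hwu]
    · calc u (c • f + k) = u (c • (f + (c⁻¹ • k : LinearMap.ker ℓ))) := by
            rw [smul_add, Submodule.coe_smul, smul_inv_smul₀ hc]
        _ = c • u f + w k := by
            rw [hsmul, hw, smul_add, hwu, hwu, Submodule.coe_smul, hsmul, smul_inv_smul₀ hc]
  have hker (v : E) : v - ℓ v • f ∈ LinearMap.ker ℓ := by simp [hf]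
  have hdecomp (v : E) : u v = ℓ v • u f + w ⟨_, hker v⟩ := by
    rw [← hline, add_sub_cancel]
  have hsum : (⟨_, hker (p + q)⟩ : LinearMap.ker ℓ) = ⟨_, hker p⟩ + ⟨_, hker q⟩ :=
    Subtype.ext (by simp only [map_add, Submodule.coe_add]; module)
  rw [hdecomp p, hdecomp q, hdecomp (p + q), hsum, map_add, map_add, add_smul]
  abel

end Additivity

section RankOne

theorem exists_dotProduct_eq_one_and_eq_zero {ι K : Type*} [Fintype ι] [Field K]
    {k g : ι → K} (h : g ∉ Submodule.span K {k}) :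
    ∃ y, g ⬝ᵥ y = 1 ∧ k ⬝ᵥ y = 0 := by
  classical
  obtain ⟨l, hlg, hlk⟩ := Submodule.exists_le_ker_of_notMem h
  obtain ⟨y, rfl⟩ := (dotProductEquiv K ι).surjective l
  have hk : y ⬝ᵥ k = 0 := hlk (Submodule.mem_span_singleton_self k)
  refine ⟨(g ⬝ᵥ y)⁻¹ • y, ?_, ?_⟩
  · rw [dotProduct_smul, smul_eq_mul, inv_mul_cancel₀]
    rwa [dotProduct_comm]
  · rw [dotProduct_smul, dotProduct_comm k, hk, smul_zero]

theorem exists_linearMap_vecMulVec_eq {m n R M : Type*} [Finite n] [CommSemiring R]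
    [AddCommMonoid M] [Module R M] (B : (m → R) →ₗ[R] (n → R) →ₗ[R] M) :
    ∃ Φ : Matrix m n R →ₗ[R] M, ∀ x f, Φ (vecMulVec x f) = B x f := by
  classical
  cases nonempty_fintype n
  let Φ : Matrix m n R →ₗ[R] M :=
    { toFun X := ∑ j, B (X.col j) (Pi.single j 1)
      map_add' X Y := by simp only [← Finset.sum_add_distrib, ← LinearMap.map_add₂]; rfl
      map_smul' c X := by simp only [Finset.smul_sum, ← LinearMap.map_smul₂]; rfl }
  refine ⟨Φ, fun x f => ?_⟩
  have hcol (j : n) : (vecMulVec x f).col j = f j • x :=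
    funext fun i => by simp [vecMulVec_apply, mul_comm]
  calc Φ (vecMulVec x f) = ∑ j, f j • B x (Pi.single j 1) := by simp [Φ, hcol]
    _ = B x (∑ j, f j • Pi.single j 1) := by simp
    _ = B x f := by rw [← pi_eq_sum_univ']

end RankOne

section Jordan

variable {ι R : Type*} [Fintype ι] [DecidableEq ι] [CommRing R]

theorem exists_eq_conjAut_of_map_single {ψ : Matrix ι ι R →ₗ[R] Matrix ι ι R} {a : ι → ι → R}
    (ha_self : ∀ i, a i i = 1) (ha_mul : ∀ i j k, a i j * a j k = a i k)
    (hsingle : ∀ i j, ψ (single i j 1) = single i j (a i j)) :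
    ∃ C, ∀ X, ψ X = conjAut R _ C X := by
  obtain _ | ⟨⟨o⟩⟩ := isEmpty_or_nonempty ι
  · exact ⟨1, fun X => Subsingleton.elim _ _⟩
  let C : (Matrix ι ι R)ˣ :=
    { val := diagonal fun i => a i o
      inv := diagonal fun i => a o i
      val_inv := by simp [ha_mul, ha_self]
      inv_val := by simp [ha_mul, ha_self] }
  have hψC : ψ = (conjAut R _ C).toLinearMap := by
    refine ext_linearMap R fun i j => LinearMap.ext_ring ?_
    ext p q
    by_cases hpq : i = p ∧ j = q
    · simp [hsingle, conjAut_apply, C, hpq, ha_mul]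
    · simp [hsingle, conjAut_apply, C, hpq, diagonal_mul, mul_diagonal]
  exact ⟨C, LinearMap.congr_fun hψC⟩

/-- A Jordan endomorphism of the matrix algebra (it preserves squares) which fixes every diagonal
matrix. -/
structure IsJordanFixingDiagonal (ψ : Matrix ι ι R →ₗ[R] Matrix ι ι R) : Prop where
  map_mul_self (X : Matrix ι ι R) : ψ (X * X) = ψ X * ψ X
  map_diagonal (d : ι → R) : ψ (diagonal d) = diagonal d

namespace IsJordanFixingDiagonal

variable {ψ : Matrix ι ι R →ₗ[R] Matrix ι ι R} (hψ : IsJordanFixingDiagonal ψ)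
include hψ

theorem comp_transpose :
    IsJordanFixingDiagonal (ψ ∘ₗ (transposeLinearEquiv ι ι R R).toLinearMap) where
  map_mul_self X := by simp [hψ.map_mul_self]
  map_diagonal d := by simp [hψ.map_diagonal]

theorem map_mul_add_mul (X Y : Matrix ι ι R) :
    ψ (X * Y + Y * X) = ψ X * ψ Y + ψ Y * ψ X := by
  have hsq := hψ.map_mul_self (X + Y)
  simp only [mul_add, add_mul, map_add, hψ.map_mul_self] at hsq ⊢
  linear_combination (norm := abel) hsq

theorem map_single_self (i : ι) : ψ (single i i 1) = single i i 1 := by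
  rw [← diagonal_single, hψ.map_diagonal]

/-- Off the entries `(i, j)` and `(j, i)` the image of `single i j 1` vanishes because its Jordan
products with `single i i 1` and `single j j 1` are itself. -/
theorem map_single {i j : ι} (hij : i ≠ j) :
    ψ (single i j 1) =
      single i j (ψ (single i j 1) i j) + single j i (ψ (single i j 1) j i) := by
  have hi := hψ.map_mul_add_mul (single i j 1) (single i i 1)
  have hj := hψ.map_mul_add_mul (single i j 1) (single j j 1)
  simp only [hψ.map_single_self, single_mul_single_same,
    single_mul_single_of_ne _ _ _ _ hij.symm, mul_one, zero_add, add_zero] at hi hj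
  have hentry {M : Matrix ι ι R} {k : ι} (hM : M = M * single k k 1 + single k k 1 * M) (p q : ι) :
      M p q = (if q = k then M p q else 0) + (if p = k then M p q else 0) := by
    have hpq := congrFun (congrFun hM p) q
    rw [Matrix.add_apply, ← diagonal_single, mul_diagonal, diagonal_mul] at hpq
    simpa [Pi.single_apply] using hpq
  ext p q
  have hpi := hentry hi p q
  have hpj := hentry hj p q
  simp only [Matrix.add_apply, single_apply]
  grind

theorem map_single_apply_mul_apply_swap {i j : ι} (hij : i ≠ j) :
    ψ (single i j 1) i j * ψ (single i j 1) j i = 0 := by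
  have hsq := hψ.map_mul_self (single i j 1)
  rw [single_mul_single_of_ne _ _ _ _ hij.symm, map_zero, hψ.map_single hij] at hsq
  simpa [add_mul, mul_add, hij, hij.symm] using (congrFun (congrFun hsq i) i).symm

theorem map_single_apply_mul_add_mul {i j : ι} (hij : i ≠ j) :
    ψ (single i j 1) i j * ψ (single j i 1) j i +
      ψ (single i j 1) j i * ψ (single j i 1) i j = 1 := by
  have hprod := hψ.map_mul_add_mul (single i j 1) (single j i 1)
  rw [single_mul_single_same, single_mul_single_same, mul_one, map_add, hψ.map_single_self,
    hψ.map_single_self, hψ.map_single hij, hψ.map_single hij.symm] at hprod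
  simpa [add_mul, mul_add, hij, hij.symm, mul_comm (ψ (single j i 1) i j)] using
    (congrFun (congrFun hprod i) i).symm

theorem map_single_apply_mul {i j k : ι} (hij : i ≠ j) (hjk : j ≠ k) (hik : i ≠ k) :
    ψ (single i j 1) i j * ψ (single j k 1) j k = ψ (single i k 1) i k := by
  have hprod := hψ.map_mul_add_mul (single i j 1) (single j k 1)
  rw [single_mul_single_same, single_mul_single_of_ne _ _ _ _ hik.symm, mul_one, add_zero,
    hψ.map_single hij, hψ.map_single hjk] at hprod
  simpa [add_mul, mul_add, hij, hij.symm, hik, hik.symm, hjk, hjk.symm] using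
    (congrFun (congrFun hprod i) k).symm

theorem map_single_apply_swap_mul {i j k : ι} (hij : i ≠ j) (hjk : j ≠ k) (hik : i ≠ k) :
    ψ (single i j 1) j i * ψ (single j k 1) k j = ψ (single i k 1) k i := by
  simpa [mul_comm] using hψ.comp_transpose.map_single_apply_mul hjk.symm hij.symm hik.symm

theorem map_single_apply_swap_eq_zero_symm {i j : ι} (hij : i ≠ j)
    (h : ψ (single i j 1) j i = 0) : ψ (single j i 1) i j = 0 := by
  have hone := hψ.map_single_apply_mul_add_mul hij
  have hzero := hψ.map_single_apply_mul_apply_swap hij.symm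
  rw [h, zero_mul, add_zero] at hone
  linear_combination ψ (single i j 1) i j * hzero - ψ (single j i 1) i j * hone

theorem map_single_apply_swap_eq_zero_right {i j k : ι} (hij : i ≠ j) (hik : i ≠ k)
    (h : ψ (single i j 1) j i = 0) : ψ (single i k 1) k i = 0 := by
  obtain rfl | hjk := eq_or_ne j k
  · exact h
  · rw [← hψ.map_single_apply_swap_mul hij hjk hik, h, zero_mul]

theorem map_single_apply_swap_eq_zero {i j p q : ι} (hij : i ≠ j) (hpq : p ≠ q)
    (h : ψ (single i j 1) j i = 0) : ψ (single p q 1) q p = 0 := by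
  obtain rfl | hip := eq_or_ne i p
  · exact hψ.map_single_apply_swap_eq_zero_right hij hpq h
  · have hswap := hψ.map_single_apply_swap_eq_zero_symm hip
      (hψ.map_single_apply_swap_eq_zero_right hij hip h)
    exact hψ.map_single_apply_swap_eq_zero_right hip.symm hpq hswap

theorem exists_eq_conjAut (h : ∀ i j, i ≠ j → ψ (single i j 1) j i = 0) :
    ∃ C, ∀ X, ψ X = conjAut R _ C X := by
  let a (i j : ι) : R := ψ (single i j 1) i j
  have ha_self (i : ι) : a i i = 1 := by simp [a, hψ.map_single_self]
  have ha_symm {i j : ι} (hij : i ≠ j) : a i j * a j i = 1 := by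
    simpa [h i j hij] using hψ.map_single_apply_mul_add_mul hij
  have ha_mul (i j k : ι) : a i j * a j k = a i k := by
    obtain rfl | hij := eq_or_ne i j
    · rw [ha_self, one_mul]
    obtain rfl | hjk := eq_or_ne j k
    · rw [ha_self, mul_one]
    obtain rfl | hik := eq_or_ne i k
    · rw [ha_self, ha_symm hij]
    · exact hψ.map_single_apply_mul hij hjk hik
  have hsingle (i j : ι) : ψ (single i j 1) = single i j (a i j) := by
    obtain rfl | hij := eq_or_ne i j
    · rw [ha_self, hψ.map_single_self]
    · rw [hψ.map_single hij, h i j hij, single_zero, add_zero]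
  exact exists_eq_conjAut_of_map_single ha_self ha_mul hsingle

theorem eq_conjAut_or_eq_conjAut_transpose [NoZeroDivisors R] :
    ∃ C, (∀ X, ψ X = conjAut R _ C X) ∨ ∀ X, ψ X = conjAut R _ C Xᵀ := by
  by_cases h : ∃ i j, i ≠ j ∧ ψ (single i j 1) j i = 0
  · obtain ⟨i, j, hij, h₀⟩ := h
    obtain ⟨C, hC⟩ := hψ.exists_eq_conjAut fun p q hpq =>
      hψ.map_single_apply_swap_eq_zero hij hpq h₀
    exact ⟨C, .inl hC⟩
  · push Not at h
    obtain ⟨C, hC⟩ := hψ.comp_transpose.exists_eq_conjAut fun i j hij => by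
      simpa [h j i hij.symm] using hψ.map_single_apply_mul_apply_swap hij.symm
    exact ⟨C, .inr fun X => by simpa using hC Xᵀ⟩

end IsJordanFixingDiagonal

end Jordan

theorem eq_diagonal_of_commute_diagonal {ι R : Type*} [Fintype ι] [DecidableEq ι] [CommRing R]
    [NoZeroDivisors R] {A : Matrix ι ι R} {e : ι → R} (he : Function.Injective e)
    (hA : Commute (diagonal e) A) : A = diagonal A.diag := by
  ext i j
  obtain rfl | hij := eq_or_ne i j
  · simp
  have hentry := congrFun (congrFun hA.eq i) j
  rw [diagonal_mul, mul_diagonal] at hentry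
  have hzero : (e i - e j) * A i j = 0 := by linear_combination hentry
  rw [diagonal_apply_ne _ hij]
  exact (mul_eq_zero.mp hzero).resolve_left (sub_ne_zero.mpr (he.ne hij))

/-- A continuous self-map of the complex square matrices which preserves commutativity and under
which no eigenvalue is lost. -/
structure IsCommSpectrumPreserver {ι : Type*} [Fintype ι] [DecidableEq ι]
    (φ : Matrix ι ι ℂ → Matrix ι ι ℂ) : Prop where
  continuous : Continuous φ
  map_commute {A B : Matrix ι ι ℂ} : Commute A B → Commute (φ A) (φ B)
  spectrum_subset (A : Matrix ι ι ℂ) : spectrum ℂ A ⊆ spectrum ℂ (φ A)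

section Preserver

variable {ι : Type*} [Fintype ι] [DecidableEq ι]

theorem isCommSpectrumPreserver_conjAut (S : (Matrix ι ι ℂ)ˣ) :
    IsCommSpectrumPreserver (conjAut ℂ _ S) where
  continuous := by
    simp only [funext (conjAut_apply S)]
    fun_prop
  map_commute h := h.map _
  spectrum_subset A := (AlgEquiv.spectrum_eq _ A).ge

theorem isCommSpectrumPreserver_transpose :
    IsCommSpectrumPreserver (transpose : Matrix ι ι ℂ → Matrix ι ι ℂ) where
  continuous := by fun_prop
  map_commute h := by rw [commute_iff_eq, ← transpose_mul, ← transpose_mul, h.eq]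
  spectrum_subset A z hz := by
    rwa [mem_spectrum_iff_isRoot_charpoly, charpoly_transpose, ← mem_spectrum_iff_isRoot_charpoly]

namespace IsCommSpectrumPreserver

variable {φ ψ : Matrix ι ι ℂ → Matrix ι ι ℂ}

theorem comp (hφ : IsCommSpectrumPreserver φ) (hψ : IsCommSpectrumPreserver ψ) :
    IsCommSpectrumPreserver (φ ∘ ψ) where
  continuous := hφ.continuous.comp hψ.continuous
  map_commute h := hφ.map_commute (hψ.map_commute h)
  spectrum_subset A := (hψ.spectrum_subset A).trans (hφ.spectrum_subset _)

variable (hφ : IsCommSpectrumPreserver φ)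
include hφ

section FixedDiagonal

variable {e : ι → ℂ} (he : Function.Injective e) (hfix : φ (diagonal e) = diagonal e)
include he hfix

theorem map_diagonal_eq_diagonal_diag (d : ι → ℂ) :
    φ (diagonal d) = diagonal (φ (diagonal d)).diag :=
  eq_diagonal_of_commute_diagonal he (hfix ▸ hφ.map_commute (commute_diagonal e d))

theorem exists_map_diagonal_apply_eq {d : ι → ℂ} (hd : Function.Injective d) (i : ι) :
    ∃ j, φ (diagonal d) i i = d j := by
  have hspec := hφ.spectrum_subset (diagonal d)
  rw [hφ.map_diagonal_eq_diagonal_diag he hfix d, spectrum_diagonal, spectrum_diagonal] at hspec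
  choose g hg using fun j => hspec ⟨j, rfl⟩
  have hg_inj : Function.Injective g := fun j k hjk => hd (by rw [← hg j, hjk, hg k])
  obtain ⟨j, rfl⟩ := Finite.surjective_of_injective hg_inj i
  exact ⟨j, hg j⟩

/-- Along the complex line from `e` to `d`, only finitely many parameters give a non-injective
tuple. Away from them the parameter space is still connected, so the eigenvalues, which `φ` could
only permute, cannot jump. -/
theorem map_diagonal_of_fixed (d : ι → ℂ) : φ (diagonal d) = diagonal d := by
  let p (z : ℂ) : ι → ℂ := AffineMap.lineMap e d z
  have hp : Continuous p := by
    simp only [p, AffineMap.lineMap_apply, vsub_eq_sub, vadd_eq_add]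
    fun_prop
  have hφp : Continuous fun z => φ (diagonal (p z)) := hφ.continuous.comp hp.matrix_diagonal
  have hcount := (finite_not_injective_lineMap he d).countable
  let U : Set ℂ := {z | ¬ Function.Injective (p z)}ᶜ
  have : PreconnectedSpace U := Subtype.preconnectedSpace
    (hcount.isConnected_compl_of_one_lt_rank (by simp)).isPreconnected
  have h₀ : (0 : ℂ) ∈ U := by simpa [U, p] using he
  have hU : Set.EqOn (fun z => φ (diagonal (p z))) (fun z => diagonal (p z)) U := by
    intro z hz
    have hdiag (i : ι) : (fun w : U => φ (diagonal (p w)) i i) = fun w : U => p w i :=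
      eq_of_forall_exists_eq (p := fun j (w : U) => p w j) (x₀ := ⟨0, h₀⟩)
        ((hφp.matrix_elem i i).comp continuous_subtype_val) (fun j => by fun_prop)
        (fun w => not_not.mp w.2)
        (fun w => hφ.exists_map_diagonal_apply_eq he hfix (not_not.mp w.2) i)
        (by simp [p, hfix])
    have hentries : (φ (diagonal (p z))).diag = p z := funext fun i => congrFun (hdiag i) ⟨z, hz⟩
    exact (hφ.map_diagonal_eq_diagonal_diag he hfix _).trans (congrArg diagonal hentries)
  have hline := Continuous.ext_on (hcount.dense_compl ℂ) hφp hp.matrix_diagonal hU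
  simpa [p] using congrFun hline 1

end FixedDiagonal

theorem exists_map_diagonal : ∃ T, ∀ d, φ (diagonal d) = conjDiagonal T d := by
  obtain ⟨f, hf⟩ := exists_injective_nat ι
  let e (i : ι) : ℂ := f i
  have he : Function.Injective e := Nat.cast_injective.comp hf
  obtain ⟨T, hT⟩ := exists_conjDiagonal_eq_of_injective (A := φ (diagonal e)) he fun i =>
    hφ.spectrum_subset _ (by simp [spectrum_diagonal])
  refine ⟨T, fun d => ?_⟩
  have hfixed := ((isCommSpectrumPreserver_conjAut T⁻¹).comp hφ).map_diagonal_of_fixed he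
    (by simp [← hT, conjDiagonal_apply]) d
  rw [conjDiagonal_apply]
  conv_rhs => rw [← hfixed]
  simp

theorem exists_map_conjDiagonal (S : (Matrix ι ι ℂ)ˣ) :
    ∃ T, ∀ d, φ (conjDiagonal S d) = conjDiagonal T d :=
  (hφ.comp (isCommSpectrumPreserver_conjAut S)).exists_map_diagonal

theorem map_smul (c : ℂ) (X : Matrix ι ι ℂ) : φ (c • X) = c • φ X := by
  refine congrFun (Continuous.ext_on (f := fun X => φ (c • X)) (dense_isDiagonalizable ι ℂ)
    (hφ.continuous.comp (by fun_prop)) (hφ.continuous.const_smul c) ?_) X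
  rintro _ ⟨S, d, rfl⟩
  obtain ⟨T, hT⟩ := hφ.exists_map_conjDiagonal S
  simp only [Pi.smul_apply, ← _root_.map_smul, hT]

theorem map_mul_self (X : Matrix ι ι ℂ) : φ (X * X) = φ X * φ X := by
  have hcont := hφ.continuous
  refine congrFun (Continuous.ext_on (f := fun X => φ (X * X)) (g := fun X => φ X * φ X)
    (dense_isDiagonalizable ι ℂ) (by fun_prop) (by fun_prop) ?_) X
  rintro _ ⟨S, d, rfl⟩
  obtain ⟨T, hT⟩ := hφ.exists_map_conjDiagonal S
  simp only [← map_mul, hT]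

theorem map_zero : φ 0 = 0 := by
  simpa using hφ.map_smul 0 0

theorem map_add_of_orthogonal {P Q : Matrix ι ι ℂ} (hP : P * P = P) (hQ : Q * Q = Q)
    (hPQ : P * Q = 0) (hQP : Q * P = 0) : φ (P + Q) = φ P + φ Q := by
  obtain ⟨S, p, q, rfl, rfl⟩ := exists_conjDiagonal_eq_of_orthogonal hP hQ hPQ hQP
  obtain ⟨T, hT⟩ := hφ.exists_map_conjDiagonal S
  simp only [← map_add, hT]

theorem map_vecMulVec_add_map_vecMulVec {x f y g : ι → ℂ} (hfx : f ⬝ᵥ x = 1) (hgy : g ⬝ᵥ y = 1)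
    (hfy : f ⬝ᵥ y = 0) (hgx : g ⬝ᵥ x = 0) :
    φ (vecMulVec x f) + φ (vecMulVec y g) = φ (vecMulVec x f + vecMulVec y g) := by
  refine (hφ.map_add_of_orthogonal ?_ ?_ ?_ ?_).symm <;>
    simp [vecMulVec_mul_vecMulVec, hfx, hgy, hfy, hgx]

theorem map_vecMulVec_exchange {x f y g : ι → ℂ} (hfx : f ⬝ᵥ x = 1) (hgy : g ⬝ᵥ y = 1)
    (hfy : f ⬝ᵥ y = 0) (hgx : g ⬝ᵥ x = 0) :
    φ (vecMulVec x f) + φ (vecMulVec y g) =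
      φ (vecMulVec x (f + g)) + φ (vecMulVec (y - x) g) := by
  rw [hφ.map_vecMulVec_add_map_vecMulVec hfx hgy hfy hgx, hφ.map_vecMulVec_add_map_vecMulVec]
  · rw [vecMulVec_add, sub_vecMulVec, add_assoc, add_sub_cancel]
  · simp [add_dotProduct, hfx, hgx]
  · simp [dotProduct_sub, hgy, hgx]
  · simp [add_dotProduct, dotProduct_sub, hfx, hgy, hfy, hgx]
  · exact hgx

theorem map_vecMulVec_add_sub {x f k g : ι → ℂ} (hfx : f ⬝ᵥ x = 1) (hkx : k ⬝ᵥ x = 0)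
    (hgx : g ⬝ᵥ x = 0) (hgk : g ∉ Submodule.span ℂ {k}) :
    φ (vecMulVec x (f + (k + g))) - φ (vecMulVec x (f + k)) =
      φ (vecMulVec x (f + g)) - φ (vecMulVec x f) := by
  obtain ⟨y, hgy, hky⟩ := exists_dotProduct_eq_one_and_eq_zero hgk
  have hf := hφ.map_vecMulVec_exchange (y := y - (f ⬝ᵥ y) • x) (g := g) hfx
    (by simp [dotProduct_sub, hgy, hgx]) (by simp [dotProduct_sub, hfx]) hgx
  have hfk := hφ.map_vecMulVec_exchange (f := f + k) (y := y - (f ⬝ᵥ y) • x) (g := g)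
    (by simp [add_dotProduct, hfx, hkx]) (by simp [dotProduct_sub, hgy, hgx])
    (by simp [dotProduct_sub, add_dotProduct, hfx, hkx, hky]) hgx
  rw [← add_assoc]
  linear_combination (norm := abel) hf - hfk

theorem map_vecMulVec_add (hι : 3 ≤ Fintype.card ι) (x p q : ι → ℂ) :
    φ (vecMulVec x (p + q)) = φ (vecMulVec x p) + φ (vecMulVec x q) := by
  obtain rfl | hx := eq_or_ne x 0
  · simp [hφ.map_zero]
  let ℓ : Module.Dual ℂ (ι → ℂ) := dotProductEquiv ℂ ι x
  have hℓ (v : ι → ℂ) : ℓ v = v ⬝ᵥ x := dotProduct_comm x v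
  have hℓ₀ : ℓ ≠ 0 := by simpa [ℓ] using hx
  obtain ⟨f, hf⟩ := LinearMap.surjective hℓ₀ 1
  have hker : 1 < Module.finrank ℂ (LinearMap.ker ℓ) := by
    have hrank := Module.Dual.finrank_ker_add_one_of_ne_zero hℓ₀
    rw [Module.finrank_fintype_fun_eq_card] at hrank
    lia
  let w (k : LinearMap.ker ℓ) := φ (vecMulVec x (f + k)) - φ (vecMulVec x f)
  have hw : ∀ k g, w (k + g) = w k + w g := map_add_of_forall_notMem_span hker fun k g hgk => by
    have hgk' : g.1 ∉ Submodule.span ℂ {k.1} := fun h => hgk <| by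
      obtain ⟨c, hc⟩ := Submodule.mem_span_singleton.mp h
      exact Submodule.mem_span_singleton.mpr ⟨c, Subtype.ext hc⟩
    have h := hφ.map_vecMulVec_add_sub ((hℓ f).symm.trans hf) ((hℓ k).symm.trans k.2)
      ((hℓ g).symm.trans g.2) hgk'
    linear_combination (norm := (simp [w]; abel)) h
  have hcont := hφ.continuous
  exact map_add_of_affine_on_hyperplane (𝕜 := ℂ) (u := fun v => φ (vecMulVec x v)) (by fun_prop)
    (fun c v => by rw [vecMulVec_smul, hφ.map_smul]) hf (AddMonoidHom.mk' w hw)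
    (fun k => (add_sub_cancel _ _).symm) p q

theorem map_add_vecMulVec (hι : 3 ≤ Fintype.card ι) (x y f : ι → ℂ) :
    φ (vecMulVec (x + y) f) = φ (vecMulVec x f) + φ (vecMulVec y f) := by
  simpa only [Function.comp_apply, transpose_vecMulVec] using
    (hφ.comp isCommSpectrumPreserver_transpose).map_vecMulVec_add hι f x y

theorem exists_linearMap (hι : 3 ≤ Fintype.card ι) :
    ∃ Φ : Matrix ι ι ℂ →ₗ[ℂ] Matrix ι ι ℂ, ⇑Φ = φ := by
  let B : (ι → ℂ) →ₗ[ℂ] (ι → ℂ) →ₗ[ℂ] Matrix ι ι ℂ :=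
    LinearMap.mk₂ ℂ (fun x f => φ (vecMulVec x f))
      (fun x y f => hφ.map_add_vecMulVec hι x y f)
      (fun c x f => by rw [smul_vecMulVec, hφ.map_smul])
      (fun x p q => hφ.map_vecMulVec_add hι x p q)
      (fun c x f => by rw [vecMulVec_smul, hφ.map_smul])
  obtain ⟨Φ, hΦ⟩ := exists_linearMap_vecMulVec_eq B
  have hcont := LinearMap.continuous_of_finiteDimensional Φ
  refine ⟨Φ, Continuous.ext_on (dense_isDiagonalizable ι ℂ) hcont hφ.continuous ?_⟩
  rintro _ ⟨S, d, rfl⟩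
  obtain ⟨T, hT⟩ := hφ.exists_map_conjDiagonal S
  have hΦT : Φ ∘ₗ (conjDiagonal S).toLinearMap = (conjDiagonal T).toLinearMap :=
    (Pi.basisFun ℂ ι).ext fun i => by simp [← hT, conjDiagonal_single_one, hΦ, B]
  exact (LinearMap.congr_fun hΦT d).trans (hT d).symm

end IsCommSpectrumPreserver

end Preserver

theorem semrl_commutativity_spectrum_preservers_general {ι : Type*} [Fintype ι] [DecidableEq ι]
    (hι : 3 ≤ Fintype.card ι) (φ : Matrix ι ι ℂ → Matrix ι ι ℂ) (hcont : Continuous φ)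
    (hcomm : ∀ A B, A * B = B * A → φ A * φ B = φ B * φ A)
    (hspec : ∀ A, spectrum ℂ A ⊆ spectrum ℂ (φ A)) :
    ∃ T : Matrix ι ι ℂ, IsUnit T.det ∧
      ((∀ X, φ X = T * X * T⁻¹) ∨ ∀ X, φ X = T * Xᵀ * T⁻¹) := by
  have hφ : IsCommSpectrumPreserver φ := ⟨hcont, hcomm _ _, hspec⟩
  obtain ⟨S, hS⟩ := hφ.exists_map_diagonal
  obtain ⟨Φ, rfl⟩ := hφ.exists_linearMap hι
  let ψ : Matrix ι ι ℂ →ₗ[ℂ] Matrix ι ι ℂ := (conjAut ℂ _ S⁻¹).toLinearMap ∘ₗ Φ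
  have hψ : IsJordanFixingDiagonal ψ :=
    { map_mul_self X := by simp [ψ, hφ.map_mul_self]
      map_diagonal d := by simp [ψ, hS, conjDiagonal_apply] }
  obtain ⟨C, hC⟩ := hψ.eq_conjAut_or_eq_conjAut_transpose
  have hΦ {X Y : Matrix ι ι ℂ} (h : ψ X = conjAut ℂ _ C Y) :
      Φ X = (S * C).val * Y * (S * C).val⁻¹ := by
    calc Φ X = conjAut ℂ _ S (ψ X) := by simp [ψ]
      _ = conjAut ℂ _ (S * C) Y := by rw [h, map_mul, AlgEquiv.mul_apply]
      _ = (S * C).val * Y * (S * C).val⁻¹ := by rw [conjAut_apply, coe_units_inv]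
  exact ⟨(S * C).val, (isUnit_iff_isUnit_det _).mp (S * C).isUnit,
    hC.imp (fun h X => hΦ (h X)) fun h X => hΦ (h X)⟩

theorem semrl_commutativity_spectrum_preservers {n : ℕ} (hn : 3 ≤ n)
    (φ : Matrix (Fin n) (Fin n) ℂ → Matrix (Fin n) (Fin n) ℂ)
    (hcont : Continuous φ)
    (hcomm : ∀ A B : Matrix (Fin n) (Fin n) ℂ, A * B = B * A → φ A * φ B = φ B * φ A)
    (hspec : ∀ A : Matrix (Fin n) (Fin n) ℂ, spectrum ℂ (φ A) = spectrum ℂ A) :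
    ∃ T : Matrix (Fin n) (Fin n) ℂ, IsUnit T.det ∧
      ((∀ X : Matrix (Fin n) (Fin n) ℂ, φ X = T * X * T⁻¹) ∨ (∀ X : Matrix (Fin n) (Fin n) ℂ, φ X = T * Xᵀ * T⁻¹)) :=
  semrl_commutativity_spectrum_preservers_general (by simpa using hn) φ hcont hcomm
    fun A => (hspec A).ge
end
end

section
/- Let A ⊆ M_n(ℂ) be a block upper-triangular subalgebra and let φ : A → M_n(ℂ) be a Jordan embedding, i.e. an injective linear map satisfying φ(X²) = φ(X)² for all X ∈ A. Then there exists an invertible matrix T ∈ M_n(ℂ) such that either φ(X) = T X T⁻¹ for all X ∈ A, or φ(X) = T Xᵗ T⁻¹ for all X ∈ A. -/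
open Matrix

noncomputable section

/-- The block index function: `blockIdx k i` is the index `s` (0-based) of the diagonal
block containing row/column `i`, for block sizes given by the list `k`. -/
def blockIdx (k : List ℕ) (i : ℕ) : ℕ :=
  ((Finset.range k.length).filter (fun s => (k.take (s + 1)).sum ≤ i)).card

/-- The block upper-triangular algebra `𝒜_{k₁,…,k_r} ⊆ M_n(ℂ)` determined by the
list of block sizes `k`. -/
def blockAlg (n : ℕ) (k : List ℕ) : Set (Matrix (Fin n) (Fin n) ℂ) :=
  { X | ∀ i j : Fin n, blockIdx k (j : ℕ) < blockIdx k (i : ℕ) → X i j = 0 }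

/-- A subset of `M_n(ℂ)` is a block upper-triangular subalgebra if it is of the form
`blockAlg n k` for some list `k` of positive integers summing to `n`. -/
def IsBlockUT (n : ℕ) (𝒜 : Set (Matrix (Fin n) (Fin n) ℂ)) : Prop :=
  ∃ k : List ℕ, (∀ m ∈ k, 0 < m) ∧ k.sum = n ∧ 𝒜 = blockAlg n k

/-- The exchange matrix `J` (ones on the antidiagonal). -/
def exchMat (n : ℕ) : Matrix (Fin n) (Fin n) ℂ :=
  Matrix.of fun i j => if (i : ℕ) + (j : ℕ) + 1 = n then 1 else 0

/-! The images of the diagonal matrix units `Eᵢᵢ` are `n` nonzero orthogonal idempotents in `M_n`,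
hence simultaneously diagonalizable of rank one, so after a conjugation `φ` fixes every `Eᵢᵢ`. The
Jordan products of `Eᵢⱼ` with `Eᵢᵢ` and `Eⱼⱼ` then force `φ Eᵢⱼ = aᵢⱼ Eᵢⱼ + cᵢⱼ Eⱼᵢ`, and `Eᵢⱼ² = 0`
leaves exactly one of `aᵢⱼ`, `cᵢⱼ` nonzero. Along a chain `i, j, k` of distinct indices the same one
survives for all three pairs; comparing every pair with an index `m` in the first block, the choice
is the same for all pairs. Transposing if necessary, it is always `a`, which is then multiplicative
along all chains, so `aᵢⱼ = aₘᵢ⁻¹ aₘⱼ` and `φ` is conjugation by a diagonal matrix. -/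

section JordanEmbedding

variable {K R S T : Type*} [CommRing K] [Ring R] [Algebra K R] [Ring S] [Ring T]

/-- A linear map `f : R → S` restricts to a Jordan embedding of the subalgebra `A ⊆ R`. Taking `f`
to be defined on all of `R` avoids coercions from `A`; its values outside `A` are irrelevant. -/
structure IsJordanEmbeddingOn [Module K S] (f : R →ₗ[K] S) (A : Subalgebra K R) : Prop where
  map_mul_self : ∀ x ∈ A, f (x * x) = f x * f x
  injOn : Set.InjOn f A

namespace IsJordanEmbeddingOn

variable [Module K S] [Module K T] {f : R →ₗ[K] S} {A : Subalgebra K R} {x y : R}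

lemma map_mul_add_mul (hf : IsJordanEmbeddingOn f A) (hx : x ∈ A) (hy : y ∈ A) :
    f (x * y + y * x) = f x * f y + f y * f x := by
  have h := hf.map_mul_self (x + y) (A.add_mem hx hy)
  simp only [add_mul, mul_add, map_add, hf.map_mul_self x hx, hf.map_mul_self y hy] at h
  rw [map_add, ← sub_eq_zero]
  rw [← sub_eq_zero] at h
  rw [← h]
  abel

lemma map_ne_zero (hf : IsJordanEmbeddingOn f A) (hx : x ∈ A) (hx0 : x ≠ 0) : f x ≠ 0 :=
  fun h ↦ hx0 (hf.injOn hx A.zero_mem (h.trans f.map_zero.symm))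

lemma comp (hf : IsJordanEmbeddingOn f A) {g : S →ₗ[K] T} (hg : ∀ y, g (y * y) = g y * g y)
    (hginj : Function.Injective g) : IsJordanEmbeddingOn (g ∘ₗ f) A where
  map_mul_self x hx := by simp only [LinearMap.comp_apply, hf.map_mul_self x hx, hg]
  injOn := hginj.comp_injOn hf.injOn

end IsJordanEmbeddingOn

lemma exists_isJordanEmbeddingOn {K R S : Type*} [Field K] [Ring R] [Algebra K R] [Ring S]
    [Module K S] {A : Subalgebra K R} (φ : A →ₗ[K] S) (hinj : Function.Injective φ)
    (hjordan : ∀ x, φ (x * x) = φ x * φ x) :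
    ∃ f : R →ₗ[K] S, IsJordanEmbeddingOn f A ∧ ∀ x : A, f x = φ x := by
  obtain ⟨f, hf⟩ := LinearMap.exists_extend (p := A.toSubmodule) φ
  have hfφ (x : A) : f x = φ x := LinearMap.congr_fun hf x
  refine ⟨f, ⟨fun x hx ↦ ?_, fun x hx y hy h ↦ ?_⟩, hfφ⟩
  · simpa [hfφ ⟨x, hx⟩] using (hfφ (⟨x, hx⟩ * ⟨x, hx⟩)).trans (hjordan ⟨x, hx⟩)
  · exact congrArg Subtype.val (hinj (((hfφ ⟨x, hx⟩).symm.trans h).trans (hfφ ⟨y, hy⟩)))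

end JordanEmbedding

section Idempotents

variable {ι K R S V W : Type*}

lemma mul_eq_zero_of_isIdempotentElem_of_anticommute [DivisionRing K] [NeZero (2 : K)]
    [Ring R] [Module K R] {e f : R} (he : IsIdempotentElem e) (hef : e * f + f * e = 0) :
    e * f = 0 := by
  have hneg : e * f = -(f * e) := eq_neg_of_add_eq_zero_left hef
  have hcomm : e * f = f * e := calc
    e * f = e * (e * f) := by rw [← mul_assoc, he.eq]
    _ = -(e * f) * e := by rw [neg_mul, mul_assoc, ← mul_neg, ← hneg]
    _ = f * e := by rw [hneg, neg_neg, mul_assoc, he.eq]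
  rw [← hcomm, ← two_smul K] at hef
  exact (smul_eq_zero.mp hef).resolve_left two_ne_zero

lemma IsJordanEmbeddingOn.orthogonalIdempotents [Field K] [NeZero (2 : K)] [Ring R] [Algebra K R]
    [Ring S] [Module K S] {f : R →ₗ[K] S} {A : Subalgebra K R} (hf : IsJordanEmbeddingOn f A)
    {e : ι → R} (he : OrthogonalIdempotents e) (heA : ∀ i, e i ∈ A) :
    OrthogonalIdempotents (f ∘ e) := by
  have hidem (i : ι) : IsIdempotentElem (f (e i)) := by
    rw [IsIdempotentElem, ← hf.map_mul_self _ (heA i), (he.idem i).eq]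
  refine ⟨hidem, fun i j hij ↦ mul_eq_zero_of_isIdempotentElem_of_anticommute (K := K) (hidem i) ?_⟩
  rw [Function.comp_apply, Function.comp_apply, ← hf.map_mul_add_mul (heA i) (heA j), he.ortho hij,
    he.ortho hij.symm, add_zero, map_zero]

lemma linearIndependent_of_apply_eq_zero [DivisionRing K] [AddCommGroup V] [Module K V]
    [AddCommGroup W] [Module K W] {p : ι → V →ₗ[K] W} {v : ι → V} (hself : ∀ i, p i (v i) ≠ 0)
    (hne : ∀ i j, i ≠ j → p i (v j) = 0) : LinearIndependent K v := by
  rw [linearIndependent_iff']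
  intro s c hc i hi
  have hpi : c i • p i (v i) = 0 := by
    rw [← Finset.sum_eq_single_of_mem (f := fun j ↦ c j • p i (v j)) i hi
      fun j _ hji ↦ by rw [hne i j hji.symm, smul_zero]]
    simpa using congrArg (p i) hc
  exact (smul_eq_zero.mp hpi).resolve_right (hself i)

lemma exists_mul_eq_mul_single [Fintype ι] [DecidableEq ι] [Field K] {P : ι → Matrix ι ι K}
    (hP : OrthogonalIdempotents P) (hP0 : ∀ i, P i ≠ 0) :
    ∃ T : Matrix ι ι K, IsUnit T.det ∧ ∀ i, P i * T = T * single i i 1 := by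
  have hfixed (i : ι) : ∃ v, v ≠ 0 ∧ P i *ᵥ v = v := by
    obtain ⟨w, hw⟩ : ∃ w, P i *ᵥ w ≠ 0 := by
      by_contra! h
      exact hP0 i (ext_of_mulVec_single fun j ↦ by rw [h, zero_mulVec])
    exact ⟨P i *ᵥ w, hw, by rw [mulVec_mulVec, (hP.idem i).eq]⟩
  choose v hv0 hv using hfixed
  have hPv (i j : ι) (hij : i ≠ j) : P i *ᵥ v j = 0 := by
    rw [← hv j, mulVec_mulVec, hP.ortho hij, zero_mulVec]
  have hindep : LinearIndependent K v :=
    linearIndependent_of_apply_eq_zero (p := fun i ↦ (P i).mulVecLin)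
      (fun i ↦ by simpa [hv] using hv0 i) hPv
  refine ⟨(of v)ᵀ, ?_, fun i ↦ ?_⟩
  · rw [← isUnit_iff_isUnit_det, ← linearIndependent_cols_iff_isUnit]
    exact hindep
  · ext k j
    have hcol : (P i * (of v)ᵀ) k j = (P i *ᵥ v j) k := rfl
    rw [hcol]
    obtain rfl | hij := eq_or_ne i j
    · simp [hv]
    · simp [hPv i j hij, hij.symm]

end Idempotents

section Peirce

variable {ι R : Type*} [Fintype ι] [DecidableEq ι] [Ring R] {F : Matrix ι ι R}

lemma apply_eq_zero_of_eq_single_mul_add_mul_single {i k l : ι}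
    (hF : F = single i i 1 * F + F * single i i 1) (hkl : k = i ↔ l = i) : F k l = 0 := by
  by_cases hk : k = i
  · obtain rfl := hk
    obtain rfl := hkl.mp rfl
    simpa using congrFun₂ hF l l
  · simpa [hk, mt hkl.mpr hk] using congrFun₂ hF k l

lemma eq_single_add_single {i j : ι} (hij : i ≠ j)
    (hi : F = single i i 1 * F + F * single i i 1) (hj : F = single j j 1 * F + F * single j j 1) :
    F = single i j (F i j) + single j i (F j i) := by
  ext k l
  by_cases hkl : k = i ∧ l = j ∨ k = j ∧ l = i
  · obtain ⟨rfl, rfl⟩ | ⟨rfl, rfl⟩ := hkl <;> simp [hij, hij.symm]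
  · have hzero : F k l = 0 := by
      by_cases hki : k = i ↔ l = i
      · exact apply_eq_zero_of_eq_single_mul_add_mul_single hi hki
      · exact apply_eq_zero_of_eq_single_mul_add_mul_single hj (by grind)
    rw [hzero, Matrix.add_apply, single_apply_of_ne _ _ _ _ _ (by tauto),
      single_apply_of_ne _ _ _ _ _ (by tauto), add_zero]

end Peirce

section Normalized

variable {ι K α : Type*} [DecidableEq ι] [Field K] [LinearOrder α] {b : ι → α}
  {φ : Matrix ι ι K →ₗ[K] Matrix ι ι K}

/-- The coefficient of `Eᵢⱼ` in the image of `Eᵢⱼ`. -/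
def directCoeff (φ : Matrix ι ι K →ₗ[K] Matrix ι ι K) (i j : ι) : K := φ (single i j 1) i j

/-- The coefficient of `Eⱼᵢ` in the image of `Eᵢⱼ`. -/
def swapCoeff (φ : Matrix ι ι K →ₗ[K] Matrix ι ι K) (i j : ι) : K := φ (single i j 1) j i

/-- The map `X ↦ (φ X)ᵀ`, which exchanges `directCoeff` and `swapCoeff`. -/
def transposeComp (φ : Matrix ι ι K →ₗ[K] Matrix ι ι K) : Matrix ι ι K →ₗ[K] Matrix ι ι K :=
  (transposeLinearEquiv ι ι K K).toLinearMap ∘ₗ φ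

lemma directCoeff_transposeComp (i j : ι) : directCoeff (transposeComp φ) i j = swapCoeff φ i j :=
  rfl

variable [Fintype ι]

variable (b φ) in
/-- A Jordan embedding of the block upper-triangular algebra of `b` fixing the diagonal matrix
units. Here `b i` is the block of the index `i`, and `Eᵢⱼ` is in the algebra iff `b i ≤ b j`. -/
structure IsNormalizedJordanEmbedding : Prop
    extends IsJordanEmbeddingOn φ (blockTriangularSubalgebra K K b) where
  map_single_self : ∀ i, φ (single i i 1) = single i i 1

namespace IsNormalizedJordanEmbedding

variable {i j k : ι}

lemma transpose (hφ : IsNormalizedJordanEmbedding b φ) :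
    IsNormalizedJordanEmbedding b (transposeComp φ) where
  toIsJordanEmbeddingOn := hφ.comp (fun Y ↦ transpose_mul Y Y) (LinearEquiv.injective _)
  map_single_self i := by simp [transposeComp, hφ.map_single_self]

lemma map_single_mul_add_mul (hφ : IsNormalizedJordanEmbedding b φ) {k l : ι} (hij : b i ≤ b j)
    (hkl : b k ≤ b l) :
    φ (single i j 1 * single k l 1 + single k l 1 * single i j 1) =
      φ (single i j 1) * φ (single k l 1) + φ (single k l 1) * φ (single i j 1) :=
  hφ.map_mul_add_mul (blockTriangular_single hij 1) (blockTriangular_single hkl 1)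

lemma map_single (hφ : IsNormalizedJordanEmbedding b φ) (hne : i ≠ j) (hij : b i ≤ b j) :
    φ (single i j 1) = single i j (directCoeff φ i j) + single j i (swapCoeff φ i j) := by
  apply eq_single_add_single hne
  · simpa [hφ.map_single_self, hne.symm] using hφ.map_single_mul_add_mul (le_refl (b i)) hij
  · simpa [hφ.map_single_self, hne.symm] using hφ.map_single_mul_add_mul (le_refl (b j)) hij

lemma directCoeff_self (hφ : IsNormalizedJordanEmbedding b φ) (i : ι) : directCoeff φ i i = 1 := by
  simp [directCoeff, hφ.map_single_self]

lemma directCoeff_mul_swapCoeff (hφ : IsNormalizedJordanEmbedding b φ) (hne : i ≠ j)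
    (hij : b i ≤ b j) : directCoeff φ i j * swapCoeff φ i j = 0 := by
  have hsq := hφ.map_mul_self _ (blockTriangular_single hij 1)
  rw [single_mul_single_of_ne _ _ _ _ hne.symm, map_zero, hφ.map_single hne hij] at hsq
  simpa [mul_add, hne] using (congrFun₂ hsq i i).symm

lemma directCoeff_ne_zero_iff (hφ : IsNormalizedJordanEmbedding b φ) (hne : i ≠ j)
    (hij : b i ≤ b j) : directCoeff φ i j ≠ 0 ↔ swapCoeff φ i j = 0 := by
  refine ⟨(mul_eq_zero.mp (hφ.directCoeff_mul_swapCoeff hne hij)).resolve_left, fun hc ha ↦ ?_⟩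
  have hE : (single i j 1 : Matrix ι ι K) ≠ 0 := fun h ↦ by simpa using congrFun₂ h i j
  refine hφ.map_ne_zero (blockTriangular_single hij 1) hE ?_
  rw [hφ.map_single hne hij, ha, hc, single_zero, single_zero, add_zero]

lemma directCoeff_mul (hφ : IsNormalizedJordanEmbedding b φ) (hne₁ : i ≠ j) (hne₂ : j ≠ k)
    (hne : i ≠ k) (hij : b i ≤ b j) (hjk : b j ≤ b k) :
    directCoeff φ i j * directCoeff φ j k = directCoeff φ i k := by
  have h := hφ.map_single_mul_add_mul hij hjk
  rw [hφ.map_single hne₁ hij, hφ.map_single hne₂ hjk] at h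
  simpa [directCoeff, add_mul, mul_add, hne, hne.symm, hne₁, hne₁.symm, hne₂, hne₂.symm] using
    (congrFun₂ h i k).symm

lemma swapCoeff_mul (hφ : IsNormalizedJordanEmbedding b φ) (hne₁ : i ≠ j) (hne₂ : j ≠ k)
    (hne : i ≠ k) (hij : b i ≤ b j) (hjk : b j ≤ b k) :
    swapCoeff φ i j * swapCoeff φ j k = swapCoeff φ i k := by
  simpa only [directCoeff_transposeComp] using hφ.transpose.directCoeff_mul hne₁ hne₂ hne hij hjk

lemma directCoeff_mul_add_swapCoeff_mul (hφ : IsNormalizedJordanEmbedding b φ) (hne : i ≠ j)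
    (hij : b i ≤ b j) (hji : b j ≤ b i) :
    directCoeff φ i j * directCoeff φ j i + swapCoeff φ i j * swapCoeff φ j i = 1 := by
  have h := hφ.map_single_mul_add_mul hij hji
  simp only [single_mul_single_same, mul_one, map_add, hφ.map_single_self] at h
  rw [hφ.map_single hne hij, hφ.map_single hne.symm hji] at h
  simpa [mul_add, hne, hne.symm, mul_comm] using (congrFun₂ h i i).symm

lemma directCoeff_mul_eq_one (hφ : IsNormalizedJordanEmbedding b φ) (hne : i ≠ j)
    (hij : b i ≤ b j) (hji : b j ≤ b i) (h : directCoeff φ i j ≠ 0) :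
    directCoeff φ i j * directCoeff φ j i = 1 := by
  simpa [(hφ.directCoeff_ne_zero_iff hne hij).mp h] using
    hφ.directCoeff_mul_add_swapCoeff_mul hne hij hji

lemma directCoeff_ne_zero_comm (hφ : IsNormalizedJordanEmbedding b φ) (hne : i ≠ j)
    (hij : b i ≤ b j) (hji : b j ≤ b i) : directCoeff φ i j ≠ 0 ↔ directCoeff φ j i ≠ 0 :=
  ⟨fun h ↦ right_ne_zero_of_mul_eq_one (hφ.directCoeff_mul_eq_one hne hij hji h),
    fun h ↦ right_ne_zero_of_mul_eq_one (hφ.directCoeff_mul_eq_one hne.symm hji hij h)⟩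

lemma directCoeff_ne_zero_iff_left (hφ : IsNormalizedJordanEmbedding b φ) (hne₁ : i ≠ j)
    (hne₂ : j ≠ k) (hne : i ≠ k) (hij : b i ≤ b j) (hjk : b j ≤ b k) :
    directCoeff φ i k ≠ 0 ↔ directCoeff φ i j ≠ 0 := by
  refine ⟨fun h ↦ ?_, fun h ↦ ?_⟩
  · rw [← hφ.directCoeff_mul hne₁ hne₂ hne hij hjk] at h
    exact left_ne_zero_of_mul h
  · rw [hφ.directCoeff_ne_zero_iff hne₁ hij] at h
    rw [hφ.directCoeff_ne_zero_iff hne (hij.trans hjk),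
      ← hφ.swapCoeff_mul hne₁ hne₂ hne hij hjk, h, zero_mul]

lemma directCoeff_ne_zero_iff_right (hφ : IsNormalizedJordanEmbedding b φ) (hne₁ : i ≠ j)
    (hne₂ : j ≠ k) (hne : i ≠ k) (hij : b i ≤ b j) (hjk : b j ≤ b k) :
    directCoeff φ i k ≠ 0 ↔ directCoeff φ j k ≠ 0 := by
  refine ⟨fun h ↦ ?_, fun h ↦ ?_⟩
  · rw [← hφ.directCoeff_mul hne₁ hne₂ hne hij hjk] at h
    exact right_ne_zero_of_mul h
  · rw [hφ.directCoeff_ne_zero_iff hne₂ hjk] at h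
    rw [hφ.directCoeff_ne_zero_iff hne (hij.trans hjk),
      ← hφ.swapCoeff_mul hne₁ hne₂ hne hij hjk, h, mul_zero]

lemma directCoeff_ne_zero_iff_of_min (hφ : IsNormalizedJordanEmbedding b φ) {m : ι}
    (hm : ∀ i, b m ≤ b i) (hij : i ≠ j) (hle : b i ≤ b j) (hk : k ≠ m) :
    directCoeff φ i j ≠ 0 ↔ directCoeff φ m k ≠ 0 := by
  have hrow (l : ι) (hl : l ≠ m) : directCoeff φ m l ≠ 0 ↔ directCoeff φ m k ≠ 0 := by
    obtain rfl | hlk := eq_or_ne l k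
    · rfl
    obtain h | h := le_total (b l) (b k)
    · exact (hφ.directCoeff_ne_zero_iff_left hl.symm hlk hk.symm (hm l) h).symm
    · exact hφ.directCoeff_ne_zero_iff_left hk.symm hlk.symm hl.symm (hm k) h
  obtain rfl | hi := eq_or_ne i m
  · exact hrow j hij.symm
  obtain rfl | hj := eq_or_ne j m
  · exact (hφ.directCoeff_ne_zero_comm hij hle (hm i)).trans (hrow i hi)
  · exact (hφ.directCoeff_ne_zero_iff_right hi.symm hij hj.symm (hm i) hle).symm.trans (hrow j hj)

lemma forall_directCoeff_ne_zero_or_forall_swapCoeff_ne_zero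
    (hφ : IsNormalizedJordanEmbedding b φ) :
    (∀ i j, i ≠ j → b i ≤ b j → directCoeff φ i j ≠ 0) ∨
      ∀ i j, i ≠ j → b i ≤ b j → swapCoeff φ i j ≠ 0 := by
  by_cases! h : ∃ p q, p ≠ q ∧ b p ≤ b q ∧ directCoeff φ p q ≠ 0
  · obtain ⟨p, q, hpq, hle, hdirect⟩ := h
    have : Nonempty ι := ⟨p⟩
    obtain ⟨m, hm⟩ := Finite.exists_min b
    have : Nontrivial ι := ⟨p, q, hpq⟩
    obtain ⟨k, hk⟩ := exists_ne m
    refine .inl fun i j hne hij ↦ ?_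
    rwa [hφ.directCoeff_ne_zero_iff_of_min hm hne hij hk,
      ← hφ.directCoeff_ne_zero_iff_of_min hm hpq hle hk]
  · refine .inr fun i j hne hij hswap ↦ ?_
    exact (hφ.directCoeff_ne_zero_iff hne hij).mpr hswap (h i j hne hij)

lemma directCoeff_mul_of_forall_ne_zero (hφ : IsNormalizedJordanEmbedding b φ)
    (h : ∀ i j, i ≠ j → b i ≤ b j → directCoeff φ i j ≠ 0) (hij : b i ≤ b j) (hjk : b j ≤ b k) :
    directCoeff φ i j * directCoeff φ j k = directCoeff φ i k := by
  obtain rfl | hne₁ := eq_or_ne i j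
  · rw [hφ.directCoeff_self, one_mul]
  obtain rfl | hne₂ := eq_or_ne j k
  · rw [hφ.directCoeff_self, mul_one]
  obtain rfl | hne := eq_or_ne i k
  · rw [hφ.directCoeff_mul_eq_one hne₁ hij hjk (h i j hne₁ hij), hφ.directCoeff_self]
  · exact hφ.directCoeff_mul hne₁ hne₂ hne hij hjk

lemma map_eq_of_forall_directCoeff_ne_zero (hφ : IsNormalizedJordanEmbedding b φ)
    (h : ∀ i j, i ≠ j → b i ≤ b j → directCoeff φ i j ≠ 0) {X : Matrix ι ι K}
    (hX : X.BlockTriangular b) : φ X = of fun i j ↦ directCoeff φ i j * X i j := by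
  have hunit (i j : ι) (hij : b i ≤ b j) : φ (single i j 1) = single i j (directCoeff φ i j) := by
    obtain rfl | hne := eq_or_ne i j
    · rw [hφ.map_single_self, hφ.directCoeff_self]
    · rw [hφ.map_single hne hij, (hφ.directCoeff_ne_zero_iff hne hij).mp (h i j hne hij),
        single_zero, add_zero]
  rw [matrix_eq_sum_single (of _)]
  conv_lhs => rw [matrix_eq_sum_single X]
  simp only [map_sum, of_apply]
  refine Finset.sum_congr rfl fun i _ ↦ Finset.sum_congr rfl fun j _ ↦ ?_
  obtain hij | hji := le_or_gt (b i) (b j)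
  · rw [← mul_one (X i j), ← smul_eq_mul, ← smul_single, map_smul, hunit i j hij, smul_single,
      smul_eq_mul, smul_eq_mul, mul_one, mul_comm]
  · rw [hX hji, mul_zero, single_zero, map_zero]

lemma exists_conj_of_forall_directCoeff_ne_zero (hφ : IsNormalizedJordanEmbedding b φ)
    (h : ∀ i j, i ≠ j → b i ≤ b j → directCoeff φ i j ≠ 0) :
    ∃ T : Matrix ι ι K, IsUnit T.det ∧ ∀ X, X.BlockTriangular b → φ X = T * X * T⁻¹ := by
  obtain _ | _ := isEmpty_or_nonempty ι
  · exact ⟨1, by simp, fun X _ ↦ Subsingleton.elim _ _⟩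
  obtain ⟨m, hm⟩ := Finite.exists_min b
  have hm0 (i : ι) : directCoeff φ m i ≠ 0 := by
    obtain rfl | hne := eq_or_ne m i
    · simp [hφ.directCoeff_self]
    · exact h m i hne (hm i)
  let D : Matrix ι ι K := diagonal fun i ↦ (directCoeff φ m i)⁻¹
  have hD : IsUnit D.det := by
    simpa [D, det_diagonal, Finset.prod_eq_zero_iff] using hm0
  refine ⟨D, hD, fun X hX ↦ ?_⟩
  suffices hinter : φ X * D = D * X by rw [← hinter, mul_nonsing_inv_cancel_right _ _ hD]
  ext i j
  rw [hφ.map_eq_of_forall_directCoeff_ne_zero h hX, mul_diagonal, diagonal_mul, of_apply]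
  obtain hij | hji := le_or_gt (b i) (b j)
  · have hi := hm0 i
    have hj := hm0 j
    field_simp
    rw [← hφ.directCoeff_mul_of_forall_ne_zero h (hm i) hij]
    ring
  · rw [hX hji, mul_zero, mul_zero, zero_mul]

lemma exists_conj_or_conj_transpose (hφ : IsNormalizedJordanEmbedding b φ) :
    ∃ T : Matrix ι ι K, IsUnit T.det ∧
      ((∀ X, X.BlockTriangular b → φ X = T * X * T⁻¹) ∨
        ∀ X, X.BlockTriangular b → φ X = T * Xᵀ * T⁻¹) := by
  obtain h | h := hφ.forall_directCoeff_ne_zero_or_forall_swapCoeff_ne_zero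
  · obtain ⟨T, hT, hconj⟩ := hφ.exists_conj_of_forall_directCoeff_ne_zero h
    exact ⟨T, hT, .inl hconj⟩
  · obtain ⟨T, hT, hconj⟩ := hφ.transpose.exists_conj_of_forall_directCoeff_ne_zero
      (by simpa only [directCoeff_transposeComp] using h)
    refine ⟨T⁻¹ᵀ, by simpa using hT, .inr fun X hX ↦ ?_⟩
    calc φ X = (transposeComp φ X)ᵀ := rfl
      _ = T⁻¹ᵀ * Xᵀ * T⁻¹ᵀ⁻¹ := by
        rw [hconj X hX, transpose_mul, transpose_mul, ← transpose_nonsing_inv,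
          nonsing_inv_nonsing_inv _ hT, mul_assoc]

end IsNormalizedJordanEmbedding

lemma IsJordanEmbeddingOn.exists_eq_conj_normalized [NeZero (2 : K)]
    (hφ : IsJordanEmbeddingOn φ (blockTriangularSubalgebra K K b)) :
    ∃ (S : Matrix ι ι K) (ψ : Matrix ι ι K →ₗ[K] Matrix ι ι K),
      IsUnit S.det ∧ IsNormalizedJordanEmbedding b ψ ∧ ∀ X, φ X = S * ψ X * S⁻¹ := by
  have hE : OrthogonalIdempotents fun i : ι ↦ (single i i 1 : Matrix ι ι K) :=
    ⟨fun i ↦ by simp [IsIdempotentElem], fun i j hij ↦ by simp [hij]⟩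
  have hmem (i : ι) : single i i 1 ∈ blockTriangularSubalgebra K K b :=
    blockTriangular_single le_rfl 1
  obtain ⟨S, hS, hφS⟩ := exists_mul_eq_mul_single (hφ.orthogonalIdempotents hE hmem)
    fun i ↦ hφ.map_ne_zero (hmem i) fun h ↦ by simpa using congrFun₂ h i i
  let conj : Matrix ι ι K →ₗ[K] Matrix ι ι K := LinearMap.mulLeftRight K (S⁻¹, S)
  have hconj (Y : Matrix ι ι K) : Y = S * conj Y * S⁻¹ := by
    simp [conj, mul_assoc, mul_nonsing_inv_cancel_left _ _ hS, mul_nonsing_inv _ hS]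
  refine ⟨S, conj ∘ₗ φ, hS, ⟨hφ.comp (fun Y ↦ ?_) fun Y Z h ↦ ?_, fun i ↦ ?_⟩, fun X ↦ hconj _⟩
  · simp [conj, mul_assoc, mul_nonsing_inv_cancel_left _ _ hS]
  · rw [hconj Y, h, ← hconj Z]
  · have hφSi : φ (single i i 1) * S = S * single i i 1 := hφS i
    simp [conj, mul_assoc, hφSi, nonsing_inv_mul_cancel_left _ _ hS]

end Normalized

theorem jordan_embedding_form_general {ι K α : Type*} [Fintype ι] [DecidableEq ι] [Field K]
    [NeZero (2 : K)] [LinearOrder α] {b : ι → α}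
    (φ : blockTriangularSubalgebra K K b →ₗ[K] Matrix ι ι K) (hinj : Function.Injective φ)
    (hjordan : ∀ X, φ (X * X) = φ X * φ X) :
    ∃ T : Matrix ι ι K, IsUnit T.det ∧
      ((∀ X, φ X = T * X * T⁻¹) ∨ ∀ X, φ X = T * (X : Matrix ι ι K)ᵀ * T⁻¹) := by
  obtain ⟨f, hf, hfφ⟩ := exists_isJordanEmbeddingOn φ hinj hjordan
  obtain ⟨S, ψ, hS, hψ, hfψ⟩ := hf.exists_eq_conj_normalized
  obtain ⟨T, hT, h⟩ := hψ.exists_conj_or_conj_transpose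
  refine ⟨S * T, by rw [det_mul]; exact hS.mul hT, h.imp (fun h X ↦ ?_) fun h X ↦ ?_⟩ <;>
  · rw [← hfφ, hfψ, h X X.2, Matrix.mul_inv_rev]
    simp only [mul_assoc]

theorem jordan_embedding_form {n : ℕ} (𝒜 : Set (Matrix (Fin n) (Fin n) ℂ))
    (h𝒜 : IsBlockUT n 𝒜)
    (φ : Matrix (Fin n) (Fin n) ℂ → Matrix (Fin n) (Fin n) ℂ)
    (hadd : ∀ X ∈ 𝒜, ∀ Y ∈ 𝒜, φ (X + Y) = φ X + φ Y)
    (hsmul : ∀ (c : ℂ), ∀ X ∈ 𝒜, φ (c • X) = c • φ X)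
    (hinj : Set.InjOn φ 𝒜)
    (hjordan : ∀ X ∈ 𝒜, φ (X * X) = φ X * φ X) :
    ∃ T : Matrix (Fin n) (Fin n) ℂ, IsUnit T.det ∧
      ((∀ X ∈ 𝒜, φ X = T * X * T⁻¹) ∨ (∀ X ∈ 𝒜, φ X = T * Xᵀ * T⁻¹)) := by
  obtain ⟨k, -, -, rfl⟩ := h𝒜
  let f : blockTriangularSubalgebra ℂ ℂ (fun i : Fin n ↦ blockIdx k i) →ₗ[ℂ]
      Matrix (Fin n) (Fin n) ℂ :=
    { toFun X := φ X
      map_add' X Y := hadd X X.2 Y Y.2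
      map_smul' c X := hsmul c X X.2 }
  obtain ⟨T, hT, h⟩ :=
    jordan_embedding_form_general f hinj.injective fun X ↦ hjordan X X.2
  exact ⟨T, hT, h.imp (fun h X hX ↦ h ⟨X, hX⟩) fun h X hX ↦ h ⟨X, hX⟩⟩
end
end

section
/- Let n ≥ 3, let A ⊆ M_n(ℂ) be a block upper-triangular subalgebra, and let φ : A → M_n(ℂ) be a continuous injective map which preserves commutativity and spectrum. Then there exists an invertible matrix T ∈ M_n(ℂ) such that either φ(X) = T X T⁻¹ for all X ∈ A, or φ(X) = T Xᵗ T⁻¹ for all X ∈ A; in particular φ is linear and satisfies φ(X²) = φ(X)² for all X ∈ A. -/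
open Matrix

noncomputable section

/-!
Conjugating the source and the target of a preserver `φ` gives a preserver again. On a conjugate
`S D S⁻¹` of the algebra `D` of diagonal matrices by a block triangular `S`, `φ` is a homomorphism:
commutativity and spectrum force this up to a permutation of the eigenvalues, and continuity along
a path of matrices with simple spectrum removes the permutation. By density `φ` commutes with
polynomials in one matrix, hence preserves squares and is additive on suitable orthogonal pairs.

Normalise `φ` to be the identity on `D`. Then it maps every matrix unit to a multiple of itself or
every matrix unit to a multiple of its transpose; composing with transposition, assume the former.
The multipliers satisfy `c i j * c j k = c i k`: the idempotents `Eᵢᵢ + a Eᵢⱼ` have images of the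
same form, commutation with idempotents supported in column `k` gives a multiplicative functional
equation for their coefficients, and homogeneity with continuity identifies the multipliers as the
slopes at infinity. So a diagonal conjugation makes `φ` fix all matrix units. This normalisation
survives conjugating by any column shear. Since a block triangular matrix with simple spectrum is
obtained from a diagonal one by successive shears, `φ` is the identity on these, and by density
everywhere.
-/

open Polynomial Topology

namespace CommutativityPreserver

section Conj

variable {ι K : Type*} [Fintype ι] [DecidableEq ι] [CommRing K]

/-- Conjugation `X ↦ S X S⁻¹` by an invertible matrix, as an algebra automorphism. -/
def conj (S : (Matrix ι ι K)ˣ) : Matrix ι ι K ≃ₐ[K] Matrix ι ι K :=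
  MulSemiringAction.toAlgEquiv K _ (ConjAct.toConjAct S)

theorem conj_apply (S : (Matrix ι ι K)ˣ) (X : Matrix ι ι K) :
    conj S X = S.val * X * S⁻¹.val := rfl

@[simp]
theorem conj_symm (S : (Matrix ι ι K)ˣ) : (conj S).symm = conj S⁻¹ := rfl

@[simp]
theorem conj_conj_inv (S : (Matrix ι ι K)ˣ) (X : Matrix ι ι K) : conj S (conj S⁻¹ X) = X :=
  (conj S).apply_symm_apply X

@[simp]
theorem conj_inv_conj (S : (Matrix ι ι K)ˣ) (X : Matrix ι ι K) : conj S⁻¹ (conj S X) = X :=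
  (conj S).symm_apply_apply X

@[simp]
theorem charpoly_conj (S : (Matrix ι ι K)ˣ) (X : Matrix ι ι K) :
    (conj S X).charpoly = X.charpoly := by
  rw [conj_apply, coe_units_inv, charpoly_units_conj]

theorem conj_inv_mulVec_eq_smul {S : (Matrix ι ι K)ˣ} {X : Matrix ι ι K} {v : ι → K} {μ : K}
    (h : X *ᵥ (S.val *ᵥ v) = μ • (S.val *ᵥ v)) : conj S⁻¹ X *ᵥ v = μ • v := by
  rw [conj_apply, inv_inv, ← mulVec_mulVec, ← mulVec_mulVec, h, mulVec_smul, mulVec_mulVec,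
    Units.inv_mul, one_mulVec]

theorem blockTriangular_units_inv {α : Type*} [LinearOrder α] {b : ι → α} {S : (Matrix ι ι K)ˣ}
    (hS : S.val.BlockTriangular b) : (S⁻¹).val.BlockTriangular b := by
  have := S.invertible
  simpa only [coe_units_inv] using blockTriangular_inv_of_blockTriangular hS

theorem blockTriangular_conj {α : Type*} [LinearOrder α] {b : ι → α} {S : (Matrix ι ι K)ˣ}
    (hS : S.val.BlockTriangular b) {X : Matrix ι ι K} (hX : X.BlockTriangular b) :
    (conj S X).BlockTriangular b :=
  (hS.mul hX).mul (blockTriangular_units_inv hS)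

/-- The elementary matrix `1 + w eᵢᵗ`, whose `i`-th column is `eᵢ + w` and whose other columns are
those of the identity; it is invertible because `w i = 0`. -/
def columnShear (i : ι) (w : ι → K) (hw : w i = 0) : (Matrix ι ι K)ˣ where
  val := 1 + vecMulVec w (Pi.single i 1)
  inv := 1 - vecMulVec w (Pi.single i 1)
  val_inv := by simp [mul_sub, add_mul, vecMulVec_mul_vecMulVec, hw]
  inv_val := by simp [mul_add, sub_mul, vecMulVec_mul_vecMulVec, hw]

variable {i : ι} {w : ι → K} {hw : w i = 0}

theorem columnShear_mulVec (v : ι → K) :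
    (columnShear i w hw).val *ᵥ v = v + v i • w := by
  simp [columnShear, add_mulVec, vecMulVec_mulVec]

theorem blockTriangular_columnShear {α : Type*} [LinearOrder α] {b : ι → α}
    (hwb : ∀ j, b i < b j → w j = 0) : (columnShear i w hw).val.BlockTriangular b := by
  refine blockTriangular_one.add fun j k hkj => ?_
  rcases eq_or_ne k i with rfl | hki
  · simp [vecMulVec_apply, hwb j hkj]
  · simp [vecMulVec_apply, hki]

end Conj

section Generic

variable {ι K : Type*} [Fintype ι] [DecidableEq ι] [Field K]

theorem exists_injective (ι K : Type*) [Finite ι] [Infinite K] :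
    ∃ d : ι → K, Function.Injective d :=
  let ⟨f, hf⟩ := Countable.exists_injective_nat ι
  ⟨Infinite.natEmbedding K ∘ f, (Infinite.natEmbedding K).injective.comp hf⟩

theorem mem_spectrum_diagonal_iff {d : ι → K} {a : K} :
    a ∈ spectrum K (diagonal d) ↔ ∃ i, d i = a := by
  rw [mem_spectrum_iff_isRoot_charpoly, charpoly_diagonal, IsRoot.def, eval_prod,
    Finset.prod_eq_zero_iff]
  simp [sub_eq_zero, eq_comm]

theorem separable_charpoly_diagonal_iff {d : ι → K} :
    (diagonal d).charpoly.Separable ↔ Function.Injective d := by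
  rw [charpoly_diagonal, separable_prod_X_sub_C_iff]

theorem exists_eq_conj_diagonal {X : Matrix ι ι K} {d : ι → K} (hd : Function.Injective d)
    (h : ∀ i, d i ∈ spectrum K X) : ∃ T : (Matrix ι ι K)ˣ, X = conj T (diagonal d) := by
  have heig : ∀ i, ∃ v, Module.End.HasEigenvector (toLin' X) (d i) v := fun i =>
    Module.End.HasEigenvalue.exists_hasEigenvector <| by
      rw [Module.End.hasEigenvalue_iff_mem_spectrum, spectrum_toLin']
      exact h i
  choose v hv using heig
  obtain ⟨T, hT⟩ : IsUnit (of v)ᵀ := linearIndependent_cols_iff_isUnit.1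
    (Module.End.eigenvectors_linearIndependent' (toLin' X) d hd v hv)
  refine ⟨T, ?_⟩
  rw [conj_apply, Units.eq_mul_inv_iff_mul_eq, hT]
  ext r c
  rw [mul_diagonal]
  simpa [mul_apply, mulVec, dotProduct, mul_comm] using congrFun (hv c).apply_eq_smul r

theorem finite_setOf_not_separable_charpoly [CharZero K] {A : Matrix ι ι K}
    (hA : A.charpoly.Separable) (B : Matrix ι ι K) :
    {t : K | ¬ (A + t • B).charpoly.Separable}.Finite := by
  let P : Matrix ι ι K[X] := A.map C + (X : K[X]) • B.map C
  -- the discriminant of the pencil, up to sign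
  let q : K[X] := resultant P.charpoly (derivative P.charpoly)
    (Fintype.card ι) (Fintype.card ι - 1)
  have hP (t : K) : (A + t • B).charpoly = P.charpoly.map (evalRingHom t) := by
    rw [← charpoly_map]
    congr 1
    ext i j
    simp [P, mul_comm t]
  have hq (t : K) : q.eval t = 0 ↔ ¬ (A + t • B).charpoly.Separable := by
    have hdeg := (A + t • B).charpoly_natDegree_eq_dim
    have hres : q.eval t = resultant (A + t • B).charpoly (derivative (A + t • B).charpoly) := by
      rw [natDegree_derivative, hdeg, hP, derivative_map, resultant_map_map]
      rfl
    rw [hres, resultant_eq_zero_iff, and_iff_right (Or.inl (charpoly_monic _).ne_zero)]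
    rfl
  have hq0 : q ≠ 0 := by
    intro h
    exact (hq 0).1 (by simp [h]) (by simpa using hA)
  simpa only [IsRoot.def, hq] using finite_setOfPred_isRoot hq0

variable {α : Type*} [LinearOrder α] {b : ι → α} {X : Matrix ι ι K}

theorem exists_triangular_eigenvector [IsAlgClosed K] (hX : X.BlockTriangular b)
    (hsep : X.charpoly.Separable) (i : ι) :
    ∃ (w : ι → K) (μ : K), w i = 0 ∧ (∀ j, b i < b j → w j = 0) ∧
      X *ᵥ (Pi.single i 1 + w) = μ • (Pi.single i 1 + w) := by
  let f : Module.End K (ι → K) := toLin' X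
  have htop : ⨆ μ, f.genEigenspace μ 1 = ⊤ :=
    (Module.End.isSemisimple_of_squarefree_aeval_eq_zero hsep.squarefree <| by
      rw [← Matrix.charpoly_toLin', LinearMap.aeval_self_charpoly]).iSup_eigenspace_eq_top
  let W : Submodule K (ι → K) := ⨅ j, ⨅ _ : b i < b j, LinearMap.ker (LinearMap.proj j)
  have mem_W {w : ι → K} : w ∈ W ↔ ∀ j, b i < b j → w j = 0 := by simp [W]
  have hW : ∀ w ∈ W, f w ∈ W := by
    refine fun w hw => mem_W.2 fun j hj => Finset.sum_eq_zero fun k _ => ?_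
    rcases lt_or_ge (b i) (b k) with hk | hk
    · rw [mem_W.1 hw k hk, mul_zero]
    · simp only [hX (hk.trans_lt hj), zero_mul]
  by_contra! hnone
  have hle : W ≤ LinearMap.ker (LinearMap.proj i) := by
    rw [Submodule.eq_iSup_inf_genEigenspace 1 hW htop]
    refine iSup_le fun μ w hw => by_contra fun hwi : w i ≠ 0 => ?_
    have hsmul : Pi.single i 1 + ((w i)⁻¹ • w - Pi.single i 1) = (w i)⁻¹ • w := by abel
    refine hnone ((w i)⁻¹ • w - Pi.single i 1) μ (by simp [hwi]) (fun j hj => ?_) ?_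
    · have hji : j ≠ i := by rintro rfl; exact hj.false
      simp [hji, mem_W.1 hw.1 j hj]
    · have hμ : X *ᵥ w = μ • w := Module.End.mem_eigenspace_iff.1 hw.2
      rw [hsmul, mulVec_smul, hμ, smul_comm]
  have hsingle : Pi.single i 1 ∈ W := mem_W.2 fun j hj => by
    rw [Pi.single_eq_of_ne]
    rintro rfl
    exact hj.false
  simpa using hle hsingle

theorem eq_diagonal_of_mulVec_single {μ : ι → K}
    (h : ∀ i, X *ᵥ Pi.single i 1 = μ i • Pi.single i 1) : X = diagonal μ :=
  ext_of_mulVec_single fun i => by rw [h, diagonal_mulVec_single, ← Pi.single_smul, smul_eq_mul]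

/- Clear the columns one at a time: a triangular eigenvector `eᵢ + w` makes the `i`-th column of
`S⁻¹ X S` diagonal, where `S` is the shear of `w`, and it keeps the columns already cleared. -/
theorem blockTriangular_induction [IsAlgClosed K] {motive : Matrix ι ι K → Prop}
    (diag : ∀ d, motive (diagonal d))
    (shear : ∀ (i : ι) (w : ι → K) (hw : w i = 0), (∀ j, b i < b j → w j = 0) →
      ∀ Y : Matrix ι ι K, Y.BlockTriangular b → motive Y → motive (conj (columnShear i w hw) Y))
    (hX : X.BlockTriangular b) (hsep : X.charpoly.Separable) : motive X := by
  suffices key : ∀ (s : Finset ι) (Y : Matrix ι ι K), Y.BlockTriangular b →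
      Y.charpoly.Separable → (∀ i ∉ s, ∃ μ : K, Y *ᵥ Pi.single i 1 = μ • Pi.single i 1) →
      motive Y from
    key Finset.univ X hX hsep (by simp)
  intro s
  induction s using Finset.induction_on with
  | empty =>
    intro Y _ _ heig
    choose μ hμ using fun i => heig i (Finset.notMem_empty i)
    exact eq_diagonal_of_mulVec_single hμ ▸ diag μ
  | insert i s _ ih =>
    intro Y hY hYsep heig
    obtain ⟨w, μ, hwi, hwb, hwμ⟩ := exists_triangular_eigenvector hY hYsep i
    let S := columnShear i w hwi
    have hS : S.val.BlockTriangular b := blockTriangular_columnShear hwb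
    have hY' : (conj S⁻¹ Y).BlockTriangular b :=
      blockTriangular_conj (blockTriangular_units_inv hS) hY
    rw [← conj_conj_inv S Y]
    refine shear i w hwi hwb _ hY' (ih _ hY' (by simpa using hYsep) fun k hk => ?_)
    rcases eq_or_ne k i with rfl | hki
    · exact ⟨μ, conj_inv_mulVec_eq_smul <| by
        simpa only [S, columnShear_mulVec, Pi.single_eq_same, one_smul] using hwμ⟩
    · obtain ⟨ν, hν⟩ := heig k (by simp [hki, hk])
      exact ⟨ν, conj_inv_mulVec_eq_smul <| by
        simpa only [S, columnShear_mulVec, Pi.single_eq_of_ne' hki, zero_smul, add_zero] using hν⟩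

theorem exists_eq_conj_diagonal_of_separable [IsAlgClosed K] (hX : X.BlockTriangular b)
    (hsep : X.charpoly.Separable) :
    ∃ S : (Matrix ι ι K)ˣ, S.val.BlockTriangular b ∧ ∃ d, X = conj S (diagonal d) := by
  refine blockTriangular_induction (motive := fun X => ∃ S : (Matrix ι ι K)ˣ,
    S.val.BlockTriangular b ∧ ∃ d, X = conj S (diagonal d)) ?_ ?_ hX hsep
  · exact fun d => ⟨1, blockTriangular_one, d, by simp [conj_apply]⟩
  · rintro i w hwi hwb _ - ⟨S, hS, d, rfl⟩
    refine ⟨columnShear i w hwi * S, (blockTriangular_columnShear hwb).mul hS, d, ?_⟩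
    simp [conj_apply, mul_assoc]

end Generic

section Topology

theorem eq_of_forall_exists_eq {X Y ι : Type*} [TopologicalSpace X] [PreconnectedSpace X]
    [TopologicalSpace Y] [T2Space Y] [Finite ι] {f : X → Y} {g : ι → X → Y} (hf : Continuous f)
    (hg : ∀ j, Continuous (g j)) (hinj : ∀ x, Function.Injective (g · x))
    (hfg : ∀ x, ∃ j, f x = g j x) {x₀ : X} {r : ι} (h₀ : f x₀ = g r x₀) : f = g r := by
  have hcompl : {x | f x = g r x}ᶜ = ⋃ j ∈ {j | j ≠ r}, {x | f x = g j x} := by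
    ext x
    obtain ⟨k, hk⟩ := hfg x
    simp [hk, (hinj x).eq_iff]
  have hopen : IsClosed {x | f x = g r x}ᶜ :=
    hcompl ▸ (Set.toFinite _).isClosed_biUnion fun j _ => isClosed_eq hf (hg j)
  have hclopen : IsClopen {x | f x = g r x} :=
    ⟨isClosed_eq hf (hg r), isClosed_compl_iff.1 hopen⟩
  exact funext (Set.eq_univ_iff_forall.1 (hclopen.eq_univ ⟨x₀, h₀⟩))

variable {ι α : Type*} [Fintype ι] [DecidableEq ι] [LinearOrder α] {b : ι → α}

theorem mem_closure_separable_charpoly {X : Matrix ι ι ℂ} (hX : X.BlockTriangular b) :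
    X ∈ closure {Y : Matrix ι ι ℂ | Y.BlockTriangular b ∧ Y.charpoly.Separable} := by
  obtain ⟨d, hd⟩ := exists_injective ι ℂ
  let γ (t : ℂ) : Matrix ι ι ℂ := diagonal d + t • (X - diagonal d)
  have hγ : Continuous γ := by fun_prop
  have hfin : {t | ¬ (γ t).charpoly.Separable}.Finite :=
    finite_setOf_not_separable_charpoly (separable_charpoly_diagonal_iff.2 hd) _
  have hmem : γ 1 ∈ closure (γ '' {t | ¬ (γ t).charpoly.Separable}ᶜ) :=
    image_closure_subset_closure_image hγ ⟨1, hfin.countable.dense_compl ℂ 1, rfl⟩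
  rw [show γ 1 = X by simp [γ]] at hmem
  refine closure_mono ?_ hmem
  rintro _ ⟨t, ht, rfl⟩
  have hdb : (diagonal d).BlockTriangular b := blockTriangular_diagonal _
  exact ⟨hdb.add ((blockTriangularSubalgebra ℂ ℂ b).smul_mem (hX.sub hdb) t), not_not.1 ht⟩

theorem eqOn_blockTriangular {Y : Type*} [TopologicalSpace Y] [T2Space Y]
    {f g : Matrix ι ι ℂ → Y} (hf : ContinuousOn f {X | X.BlockTriangular b})
    (hg : ContinuousOn g {X | X.BlockTriangular b})
    (h : ∀ X : Matrix ι ι ℂ, X.BlockTriangular b → X.charpoly.Separable → f X = g X) :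
    Set.EqOn f g {X | X.BlockTriangular b} :=
  Set.EqOn.of_subset_closure (fun X hX => h X hX.1 hX.2) hf hg (fun _ hX => hX.1)
    fun _ => mem_closure_separable_charpoly

end Topology

section Preserver

variable {ι α : Type*} [Fintype ι] [DecidableEq ι] [LinearOrder α] {b : ι → α}
  {φ : Matrix ι ι ℂ → Matrix ι ι ℂ} {X : Matrix ι ι ℂ} {S : (Matrix ι ι ℂ)ˣ}

/-- The restriction of `φ` to the block triangular matrices is a continuous injective map which
preserves commutativity and spectrum. -/
structure IsPreserver (b : ι → α) (φ : Matrix ι ι ℂ → Matrix ι ι ℂ) : Prop where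
  continuousOn : ContinuousOn φ {X | X.BlockTriangular b}
  injOn : Set.InjOn φ {X | X.BlockTriangular b}
  commute {X Y : Matrix ι ι ℂ} :
    X.BlockTriangular b → Y.BlockTriangular b → Commute X Y → Commute (φ X) (φ Y)
  spectrum_eq {X : Matrix ι ι ℂ} : X.BlockTriangular b → spectrum ℂ (φ X) = spectrum ℂ X

theorem continuous_conj (S : (Matrix ι ι ℂ)ˣ) : Continuous (conj S) :=
  (conj S).toLinearMap.continuous_of_finiteDimensional

theorem blockTriangular_aeval (hX : X.BlockTriangular b) (p : ℂ[X]) :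
    (aeval X p).BlockTriangular b := by
  let Y : blockTriangularSubalgebra ℂ ℂ b := ⟨X, hX⟩
  simpa only [aeval_subalgebra_coe, mem_blockTriangularSubalgebra] using (aeval Y p).2

theorem spectrum_transpose (X : Matrix ι ι ℂ) : spectrum ℂ Xᵀ = spectrum ℂ X := by
  ext
  simp only [mem_spectrum_iff_isRoot_charpoly, charpoly_transpose]

namespace IsPreserver

theorem conj_comp (h : IsPreserver b φ) (T : (Matrix ι ι ℂ)ˣ) :
    IsPreserver b fun X => conj T (φ X) where
  continuousOn := (continuous_conj T).comp_continuousOn h.continuousOn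
  injOn := (conj T).injective.comp_injOn h.injOn
  commute hX hY hXY := (h.commute hX hY hXY).map (conj T)
  spectrum_eq hX := (AlgEquiv.spectrum_eq (conj T) _).trans (h.spectrum_eq hX)

theorem comp_conj (h : IsPreserver b φ) (hS : S.val.BlockTriangular b) :
    IsPreserver b fun X => φ (conj S X) where
  continuousOn := h.continuousOn.comp (continuous_conj S).continuousOn
    fun _ => blockTriangular_conj hS
  injOn := h.injOn.comp (conj S).injective.injOn fun _ => blockTriangular_conj hS
  commute hX hY hXY :=
    h.commute (blockTriangular_conj hS hX) (blockTriangular_conj hS hY) (hXY.map (conj S))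
  spectrum_eq hX :=
    (h.spectrum_eq (blockTriangular_conj hS hX)).trans (AlgEquiv.spectrum_eq (conj S) _)

theorem transpose (h : IsPreserver b φ) : IsPreserver b fun X => (φ X)ᵀ where
  continuousOn := continuous_id.matrix_transpose.comp_continuousOn h.continuousOn
  injOn := transpose_injective.comp_injOn h.injOn
  commute hX hY hXY := by
    simpa only [commute_iff_eq, transpose_mul] using congrArg Matrix.transpose
      (h.commute hX hY hXY).symm.eq
  spectrum_eq hX := (spectrum_transpose _).trans (h.spectrum_eq hX)

theorem exists_apply_diagonal_eq_diagonal (h : IsPreserver b φ) {d₀ : ι → ℂ}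
    (hd₀ : Function.Injective d₀) (hφ : φ (diagonal d₀) = diagonal d₀) (d : ι → ℂ) :
    ∃ e : ι → ℂ, φ (diagonal d) = diagonal e ∧ Set.range e = Set.range d := by
  have hcomm : Commute (φ (diagonal d)) (diagonal d₀) := hφ ▸ h.commute
    (blockTriangular_diagonal _) (blockTriangular_diagonal _) (commute_diagonal d d₀)
  have hdiag : φ (diagonal d) = diagonal fun i => φ (diagonal d) i i := by
    ext r c
    rcases eq_or_ne r c with rfl | hrc
    · simp
    · have hentry : φ (diagonal d) r c * d₀ c = d₀ r * φ (diagonal d) r c := by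
        simpa using congrFun₂ hcomm.eq r c
      rw [diagonal_apply_ne _ hrc]
      refine (mul_eq_zero.1 ?_).resolve_left (sub_ne_zero.2 (hd₀.ne hrc))
      linear_combination -hentry
  refine ⟨_, hdiag, ?_⟩
  have hspec := h.spectrum_eq (blockTriangular_diagonal (b := b) d)
  rw [hdiag] at hspec
  ext a
  simpa [mem_spectrum_diagonal_iff] using Set.ext_iff.1 hspec a

theorem apply_diagonal_eq_self (h : IsPreserver b φ) {d₀ : ι → ℂ} (hd₀ : Function.Injective d₀)
    (hφ : φ (diagonal d₀) = diagonal d₀) (d : ι → ℂ) : φ (diagonal d) = diagonal d := by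
  let γ (z : ℂ) : ι → ℂ := d₀ + z • (d - d₀)
  have hγ₁ : γ 1 = d := by simp [γ]
  have hcont : Continuous fun z => φ (diagonal (γ z)) :=
    h.continuousOn.comp_continuous (by fun_prop) fun z => blockTriangular_diagonal _
  let U : Set ℂ := {z | Function.Injective (γ z)}
  have hU : Uᶜ.Countable := by
    refine ((finite_setOf_not_separable_charpoly (separable_charpoly_diagonal_iff.2 hd₀)
      (diagonal (d - d₀))).subset fun z hz => ?_).countable
    rwa [Set.mem_ofPred_eq, ← diagonal_smul, diagonal_add, separable_charpoly_diagonal_iff]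
  have hdense : Dense U := by simpa using hU.dense_compl ℂ
  have : PreconnectedSpace U := isPreconnected_iff_preconnectedSpace.1 <| by
    simpa using (hU.isConnected_compl_of_one_lt_rank (by simp)).isPreconnected
  have hentry (r : ι) : (fun z : U => φ (diagonal (γ z)) r r) = fun z : U => γ z r := by
    refine eq_of_forall_exists_eq (g := fun j (z : U) => γ z j)
      ((hcont.comp continuous_subtype_val).matrix_elem r r) (fun j => by fun_prop)
      (fun z => z.2) (fun z => ?_) (x₀ := ⟨0, by simpa [U, γ] using hd₀⟩) (by simp [γ, hφ])
    obtain ⟨e, he, hrange⟩ := h.exists_apply_diagonal_eq_diagonal hd₀ hφ (γ z)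
    obtain ⟨j, hj⟩ := hrange ▸ Set.mem_range_self r
    exact ⟨j, by simp [he, hj]⟩
  have hEqOn : Set.EqOn (fun z => φ (diagonal (γ z))) (fun z => diagonal (γ z)) U := by
    intro z hz
    obtain ⟨e, he, -⟩ := h.exists_apply_diagonal_eq_diagonal hd₀ hφ (γ z)
    have her (r : ι) : e r = γ z r := by simpa [he] using congrFun (hentry r) ⟨z, hz⟩
    exact he.trans (congrArg diagonal (funext her))
  simpa [hγ₁] using congrFun (hcont.ext_on hdense (by fun_prop) hEqOn) 1

theorem exists_apply_diagonal_eq_conj (h : IsPreserver b φ) :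
    ∃ T : (Matrix ι ι ℂ)ˣ, ∀ d, φ (diagonal d) = conj T (diagonal d) := by
  obtain ⟨d₀, hd₀⟩ := exists_injective ι ℂ
  obtain ⟨T, hT⟩ : ∃ T, φ (diagonal d₀) = conj T (diagonal d₀) :=
    exists_eq_conj_diagonal hd₀ fun i => by
      rw [h.spectrum_eq (blockTriangular_diagonal _), mem_spectrum_diagonal_iff]
      exact ⟨i, rfl⟩
  refine ⟨T, fun d => ?_⟩
  exact (conj T).symm_apply_eq.1 <|
    (h.conj_comp T⁻¹).apply_diagonal_eq_self hd₀ (by rw [hT, conj_inv_conj]) d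

theorem exists_algHom_apply_conj_diagonal (h : IsPreserver b φ) (hS : S.val.BlockTriangular b) :
    ∃ L : (ι → ℂ) →ₐ[ℂ] Matrix ι ι ℂ, ∀ d, φ (conj S (diagonal d)) = L d := by
  obtain ⟨T, hT⟩ := (h.comp_conj hS).exists_apply_diagonal_eq_conj
  exact ⟨(conj T).toAlgHom.comp (diagonalAlgHom ℂ), hT⟩

theorem map_aeval (h : IsPreserver b φ) (hX : X.BlockTriangular b) (p : ℂ[X]) :
    φ (aeval X p) = aeval (φ X) p := by
  refine eqOn_blockTriangular (f := fun X => φ (aeval X p)) (g := fun X => aeval (φ X) p)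
    (h.continuousOn.comp p.continuous_aeval.continuousOn fun X hX => blockTriangular_aeval hX p)
    (p.continuous_aeval.comp_continuousOn h.continuousOn) (fun X hX hsep => ?_) hX
  obtain ⟨S, hS, d, rfl⟩ := exists_eq_conj_diagonal_of_separable hX hsep
  obtain ⟨L, hL⟩ := h.exists_algHom_apply_conj_diagonal hS
  calc φ (aeval (conj S (diagonal d)) p) = φ (conj S (diagonal (aeval d p))) := by
        rw [aeval_algHom_apply (conj S), ← diagonalAlgHom_apply ℂ, ← diagonalAlgHom_apply ℂ,
          aeval_algHom_apply]
    _ = aeval (φ (conj S (diagonal d))) p := by rw [hL, hL, aeval_algHom_apply]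

theorem map_smul (h : IsPreserver b φ) (hX : X.BlockTriangular b) (c : ℂ) :
    φ (c • X) = c • φ X := by
  have := h.map_aeval hX (c • Polynomial.X)
  rwa [_root_.map_smul, _root_.map_smul, aeval_X, aeval_X] at this

theorem map_zero (h : IsPreserver b φ) : φ 0 = 0 := by
  simpa using h.map_smul blockTriangular_zero 0

theorem map_mul_self (h : IsPreserver b φ) (hX : X.BlockTriangular b) :
    φ (X * X) = φ X * φ X := by
  have := h.map_aeval hX (Polynomial.X ^ 2)
  rwa [aeval_X_pow, aeval_X_pow, sq, sq] at this

/- `P` and `X` are both polynomials in `2 • P + X`, on which `φ` is a homomorphism. -/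
theorem map_add_and_mul_eq_zero (h : IsPreserver b φ) {P : Matrix ι ι ℂ}
    (hPb : P.BlockTriangular b) (hXb : X.BlockTriangular b) {c : ℂ} (hP : IsIdempotentElem P)
    (hX : X * X = c • X) (hc : c ≠ 2) (hPX : P * X = 0) (hXP : X * P = 0) :
    φ (P + X) = φ P + φ X ∧ φ P * φ X = 0 := by
  let Z := (2 : ℂ) • P + X
  have hZ : Z.BlockTriangular b :=
    ((blockTriangularSubalgebra ℂ ℂ b).smul_mem hPb 2).add hXb
  let p : ℂ[X] := C (4 - 2 * c)⁻¹ * (Polynomial.X ^ 2 - C c * Polynomial.X)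
  let q : ℂ[X] := Polynomial.X - C 2 * p
  have hp : aeval Z p = P := by
    have hne : 4 - 2 * c ≠ 0 := fun h₀ => hc (by linear_combination -h₀ / 2)
    have hsq : Z ^ 2 - c • Z = (4 - 2 * c) • P := by
      simp only [Z, sq, add_mul, mul_add, smul_mul_assoc, mul_smul_comm, hP.eq, hPX, hXP, hX]
      module
    simp [p, ← Algebra.smul_def, hsq, smul_smul, hne]
  have hq : aeval Z q = X := by
    simp [q, hp, ← Algebra.smul_def, Z]
  have hφP : φ P = aeval (φ Z) p := by rw [← h.map_aeval hZ, hp]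
  have hφX : φ X = aeval (φ Z) q := by rw [← h.map_aeval hZ, hq]
  constructor
  · rw [hφP, hφX, ← _root_.map_add, ← h.map_aeval hZ, _root_.map_add, hp, hq]
  · rw [hφP, hφX, ← _root_.map_mul, ← h.map_aeval hZ, _root_.map_mul, hp, hq, hPX, h.map_zero]

theorem tendsto_smul_apply (h : IsPreserver b φ) {D : Matrix ι ι ℂ} (hD : D.BlockTriangular b)
    (hX : X.BlockTriangular b) :
    Filter.Tendsto (fun t : ℂ => t • φ (D + t⁻¹ • X)) (𝓝[≠] 0) (𝓝 (φ X)) := by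
  have hmem (t : ℂ) : (t • D + X).BlockTriangular b :=
    ((blockTriangularSubalgebra ℂ ℂ b).smul_mem hD t).add hX
  have hcont : Continuous fun t : ℂ => φ (t • D + X) :=
    h.continuousOn.comp_continuous (by fun_prop) hmem
  have hlim : Filter.Tendsto (fun t : ℂ => φ (t • D + X)) (𝓝[≠] 0) (𝓝 (φ X)) := by
    simpa using (hcont.tendsto 0).mono_left nhdsWithin_le_nhds
  refine hlim.congr' ?_
  filter_upwards [self_mem_nhdsWithin] with t (ht : t ≠ 0)
  have hmem' : (D + t⁻¹ • X).BlockTriangular b :=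
    hD.add ((blockTriangularSubalgebra ℂ ℂ b).smul_mem hX t⁻¹)
  rw [← h.map_smul hmem', smul_add, smul_inv_smul₀ ht]

end IsPreserver

end Preserver

section Support

variable {ι R : Type*} {s : Set ι} {i j k : ι}

/-- All nonzero entries of `X` lie in rows and columns with index in `s`. -/
def IsSupportedOn [Zero R] (s : Set ι) (X : Matrix ι ι R) : Prop :=
  ∀ k ∉ s, ∀ l, X k l = 0 ∧ X l k = 0

theorem isSupportedOn_single [Zero R] [DecidableEq ι] (i j : ι) (a : R) :
    IsSupportedOn {i, j} (single i j a) := by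
  intro k hk l
  have hne : k ≠ i ∧ k ≠ j := by simpa using hk
  simp [hne.1.symm, hne.2.symm]

variable [Semiring R] {M N X : Matrix ι ι R}

theorem IsSupportedOn.eq_sum_single [DecidableEq ι] (hN : IsSupportedOn {i, j} N) (hij : i ≠ j) :
    N = single i i (N i i) + single i j (N i j) + (single j i (N j i) + single j j (N j j)) := by
  ext r c
  by_cases hr : r ∈ ({i, j} : Set ι)
  · by_cases hc : c ∈ ({i, j} : Set ι)
    · rcases hr with rfl | rfl <;> rcases hc with rfl | rfl <;> simp [hij, hij.symm]
    · have hne : c ≠ i ∧ c ≠ j := by simpa using hc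
      simp [(hN c hc r).2, hne.1.symm, hne.2.symm]
  · have hne : r ≠ i ∧ r ≠ j := by simpa using hr
    simp [(hN r hr c).1, hne.1.symm, hne.2.symm]

variable [Fintype ι]

theorem IsSupportedOn.apply_mul_apply_eq_zero (hN : IsSupportedOn {i, j} N)
    (hM : IsSupportedOn {i, k} M) (hij : i ≠ j) (hjk : j ≠ k) (hNM : Commute N M) :
    N j i * M i k = 0 := by
  have hmul : (N * M) j k = N j i * M i k := by
    rw [mul_apply]
    refine Finset.sum_eq_single_of_mem i (Finset.mem_univ i) fun l _ hli => ?_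
    rcases eq_or_ne l j with rfl | hlj
    · rw [(hM l (by simp [hli, hjk]) k).1, mul_zero]
    · rw [(hN l (by simp [hli, hlj]) j).2, zero_mul]
  rw [← hmul, hNM.eq, mul_apply]
  exact Finset.sum_eq_zero fun l _ => by rw [(hM j (by simp [hij.symm, hjk]) l).1, zero_mul]

variable [DecidableEq ι]

theorem IsSupportedOn.single_mul_eq_zero (hX : IsSupportedOn s X) (hk : k ∉ s) (a : R) :
    single i k a * X = 0 := by
  ext r c
  simp [mul_apply, single_apply, ite_and, (hX k hk c).1]

theorem IsSupportedOn.mul_single_eq_zero (hX : IsSupportedOn s X) (hk : k ∉ s) (a : R) :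
    X * single k i a = 0 := by
  ext r c
  simp [mul_apply, single_apply, ite_and, (hX k hk r).2]

theorem isSupportedOn_of_single_mul_eq_zero (h : ∀ k ∉ s, single k k 1 * X = 0 ∧
    X * single k k 1 = 0) : IsSupportedOn s X := fun k hk l =>
  ⟨by simpa using congrFun₂ (h k hk).1 k l, by simpa using congrFun₂ (h k hk).2 l k⟩

theorem IsSupportedOn.eq_single_of_mul_self_eq_zero [NoZeroDivisors R]
    (hN : IsSupportedOn {i, j} N) (hij : i ≠ j) (hNN : N * N = 0) (hji : N j i = 0) :
    N = single i j (N i j) := by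
  have hsum := hN.eq_sum_single hij
  rw [hsum] at hNN
  have hii : N i i = 0 := by simpa [add_mul, mul_add, hij, hij.symm, hji] using congrFun₂ hNN i i
  have hjj : N j j = 0 := by simpa [add_mul, mul_add, hij, hij.symm, hji] using congrFun₂ hNN j j
  simpa [hii, hji, hjj] using hsum

theorem IsSupportedOn.eq_single_add_single_of_isIdempotentElem [IsCancelMulZero R]
    (hN : IsSupportedOn {i, j} N) (hij : i ≠ j) (hNN : IsIdempotentElem N) (hN₀ : N ≠ 0)
    (hji : N j i = 0) (hjj : N j j = 0) : N = single i i 1 + single i j (N i j) := by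
  have hsum : N = single i i (N i i) + single i j (N i j) := by
    simpa [hji, hjj] using hN.eq_sum_single hij
  have hii : N i i * N i i = N i i := by
    have h := congrFun₂ hNN.eq i i
    rw [hsum] at h
    simpa [add_mul, mul_add, hij.symm] using h
  rcases IsIdempotentElem.iff_eq_zero_or_one.1 hii with h₀ | h₁
  · rw [h₀, single_zero, zero_add] at hsum
    refine absurd ?_ hN₀
    rw [← hNN.eq, hsum, single_mul_single_of_ne _ _ _ _ hij.symm]
  · rwa [h₁] at hsum

theorem IsSupportedOn.exists_eq_single [NoZeroDivisors R] (hN : IsSupportedOn {i, j} N)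
    (hM : IsSupportedOn {i, k} M) (hij : i ≠ j) (hik : i ≠ k) (hjk : j ≠ k) (hNN : N * N = 0)
    (hMM : M * M = 0) (hN₀ : N ≠ 0) (hM₀ : M ≠ 0) (hNM : Commute N M) :
    ((∃ c, N = single i j c) ∧ ∃ c, M = single i k c) ∨
      (∃ c, N = single j i c) ∧ ∃ c, M = single k i c := by
  have hN' : IsSupportedOn {j, i} N := Set.pair_comm i j ▸ hN
  have hM' : IsSupportedOn {k, i} M := Set.pair_comm i k ▸ hM
  have hMN := hM.apply_mul_apply_eq_zero hN hik hjk.symm hNM.symm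
  rcases mul_eq_zero.1 (hN.apply_mul_apply_eq_zero hM hij hjk hNM) with hji | hik₀
  · have hNeq := hN.eq_single_of_mul_self_eq_zero hij hNN hji
    have hij₀ : N i j ≠ 0 := fun h₀ => hN₀ (by rw [hNeq, h₀, single_zero])
    exact Or.inl ⟨⟨_, hNeq⟩, _, hM.eq_single_of_mul_self_eq_zero hik hMM
      ((mul_eq_zero.1 hMN).resolve_right hij₀)⟩
  · have hMeq := hM'.eq_single_of_mul_self_eq_zero hik.symm hMM hik₀
    have hki₀ : M k i ≠ 0 := fun h₀ => hM₀ (by rw [hMeq, h₀, single_zero])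
    exact Or.inr ⟨⟨_, hN'.eq_single_of_mul_self_eq_zero hij.symm hNN
      ((mul_eq_zero.1 hMN).resolve_left hki₀)⟩, _, hMeq⟩

end Support

section FixesDiagonal

variable {ι α : Type*} [LinearOrder α] {b : ι → α}

theorem transpose_eq_single {ι R : Type*} [DecidableEq ι] [Zero R] {X : Matrix ι ι R} {i j : ι}
    {c : R} : Xᵀ = single i j c ↔ X = single j i c := by
  rw [← transpose_inj, transpose_transpose, transpose_single]

theorem forall_iff_of_rows_of_columns [Finite ι] (hι : 3 ≤ ENat.card ι) {p : ι → ι → Prop}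
    (row : ∀ i j k, i ≠ j → i ≠ k → b i ≤ b j → b i ≤ b k → (p i j ↔ p i k))
    (col : ∀ i j k, i ≠ k → j ≠ k → b i ≤ b k → b j ≤ b k → (p i k ↔ p j k)) :
    ∃ q : Prop, ∀ i j, i ≠ j → b i ≤ b j → (p i j ↔ q) := by
  have : Nonempty ι := (ENat.one_le_card_iff_nonempty ι).1 ((by norm_num : (1 : ℕ∞) ≤ 3).trans hι)
  obtain ⟨m, hm⟩ := Finite.exists_min b
  obtain ⟨l, hlm, -⟩ := ENat.exists_ne_ne_of_three_le hι m m
  have hml (j : ι) (hj : m ≠ j) : p m j ↔ p m l := row m j l hj hlm.symm (hm j) (hm l)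
  refine ⟨p m l, fun i j hij hb => ?_⟩
  rcases ne_or_eq m j with hmj | rfl
  · exact (col i m j hij hmj hb (hm j)).trans (hml j hmj)
  · obtain ⟨k, hki, hkm⟩ := ENat.exists_ne_ne_of_three_le hι i m
    have hbik : b i ≤ b k := hb.trans (hm k)
    exact (row i m k hij hki.symm hb hbik).trans <|
      (col i m k hki.symm hkm.symm hbik (hm k)).trans (hml k hkm.symm)

variable [Fintype ι] [DecidableEq ι] {φ : Matrix ι ι ℂ → Matrix ι ι ℂ} {X : Matrix ι ι ℂ}
  {i j k : ι}

/-- A preserver which is normalised to be the identity on diagonal matrices. -/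
structure FixesDiagonal (b : ι → α) (φ : Matrix ι ι ℂ → Matrix ι ι ℂ) : Prop
    extends IsPreserver b φ where
  map_diagonal (d : ι → ℂ) : φ (diagonal d) = diagonal d

/-- `φ` maps the matrix unit at `(i, j)` to a multiple of itself. -/
def ScalesSingle (φ : Matrix ι ι ℂ → Matrix ι ι ℂ) (i j : ι) : Prop :=
  ∃ c : ℂ, φ (single i j 1) = single i j c

namespace FixesDiagonal

theorem transpose (h : FixesDiagonal b φ) : FixesDiagonal b fun X => (φ X)ᵀ where
  toIsPreserver := h.toIsPreserver.transpose
  map_diagonal d := by rw [h.map_diagonal, diagonal_transpose]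

theorem map_single_self (h : FixesDiagonal b φ) (i : ι) (a : ℂ) :
    φ (single i i a) = single i i a := by
  rw [← diagonal_single, h.map_diagonal]

theorem isSupportedOn (h : FixesDiagonal b φ) (hX : X.BlockTriangular b) {c : ℂ}
    (hXX : X * X = c • X) (hc : c ≠ 2) {s : Set ι} (hs : IsSupportedOn s X) :
    IsSupportedOn s (φ X) := by
  refine isSupportedOn_of_single_mul_eq_zero fun k hk => ?_
  have hE : (single k k (1 : ℂ)).BlockTriangular b := blockTriangular_single le_rfl _
  have hEX := hs.single_mul_eq_zero hk (i := k) 1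
  have hXE := hs.mul_single_eq_zero hk (i := k) 1
  have hmul := (h.map_add_and_mul_eq_zero hE hX (by simp [IsIdempotentElem]) hXX hc hEX hXE).2
  have hcomm := h.commute hE hX (hEX.trans hXE.symm)
  rw [h.map_single_self] at hmul hcomm
  exact ⟨hmul, hcomm.eq.symm.trans hmul⟩

theorem isSupportedOn_map_single (h : FixesDiagonal b φ) (hij : i ≠ j) (hb : b i ≤ b j) :
    IsSupportedOn {i, j} (φ (single i j 1)) :=
  h.isSupportedOn (c := 0) (blockTriangular_single hb _) (by simp [hij.symm]) (by simp)
    (isSupportedOn_single i j 1)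

theorem map_single_mul_self (h : FixesDiagonal b φ) (hij : i ≠ j) (hb : b i ≤ b j) :
    φ (single i j 1) * φ (single i j 1) = 0 := by
  rw [← h.map_mul_self (blockTriangular_single hb _), single_mul_single_of_ne _ _ _ _ hij.symm,
    h.map_zero]

theorem map_ne_zero (h : FixesDiagonal b φ) (hX : X.BlockTriangular b) (hX₀ : X ≠ 0) :
    φ X ≠ 0 := fun h₀ => hX₀ (h.injOn hX blockTriangular_zero (h₀.trans h.map_zero.symm))

theorem map_single_ne_zero (h : FixesDiagonal b φ) (hb : b i ≤ b j) : φ (single i j 1) ≠ 0 :=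
  h.map_ne_zero (blockTriangular_single hb 1) fun h₀ => by simpa using congrFun₂ h₀ i j

theorem map_eq_single_add_single (h : FixesDiagonal b φ) (hij : i ≠ j)
    (hX : X.BlockTriangular b) (hXX : IsIdempotentElem X) (hX₀ : X ≠ 0)
    (hs : IsSupportedOn {i, j} X) (hji : φ X j i = 0) (hjj : φ X j j = 0) :
    φ X = single i i 1 + single i j (φ X i j) :=
  (h.isSupportedOn (c := 1) hX (by rw [one_smul, hXX.eq]) (by norm_num)
    hs).eq_single_add_single_of_isIdempotentElem hij
    ((h.map_mul_self hX).symm.trans (congrArg φ hXX.eq)) (h.map_ne_zero hX hX₀) hji hjj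

theorem scalesSingle_of_row (h : FixesDiagonal b φ) (hij : i ≠ j) (hik : i ≠ k) (hjk : j ≠ k)
    (hbj : b i ≤ b j) (hbk : b i ≤ b k) :
    ScalesSingle φ i j ∧ ScalesSingle φ i k ∨
      ScalesSingle (fun X => (φ X)ᵀ) i j ∧ ScalesSingle (fun X => (φ X)ᵀ) i k := by
  have hcomm := h.commute (blockTriangular_single hbj 1) (blockTriangular_single hbk 1)
    (by simp [commute_iff_eq, hij.symm, hik.symm])
  simpa only [ScalesSingle, transpose_eq_single] using
    (h.isSupportedOn_map_single hij hbj).exists_eq_single (h.isSupportedOn_map_single hik hbk)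
    hij hik hjk (h.map_single_mul_self hij hbj) (h.map_single_mul_self hik hbk)
    (h.map_single_ne_zero hbj) (h.map_single_ne_zero hbk) hcomm

theorem scalesSingle_of_column (h : FixesDiagonal b φ) (hik : i ≠ k) (hjk : j ≠ k) (hij : i ≠ j)
    (hbi : b i ≤ b k) (hbj : b j ≤ b k) :
    ScalesSingle φ i k ∧ ScalesSingle φ j k ∨
      ScalesSingle (fun X => (φ X)ᵀ) i k ∧ ScalesSingle (fun X => (φ X)ᵀ) j k := by
  have hcomm := h.commute (blockTriangular_single hbi 1) (blockTriangular_single hbj 1)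
    (by simp [commute_iff_eq, hik.symm, hjk.symm])
  have hsupp {l : ι} (hlk : l ≠ k) (hbl : b l ≤ b k) : IsSupportedOn {k, l} (φ (single l k 1)) :=
    Set.pair_comm l k ▸ h.isSupportedOn_map_single hlk hbl
  simpa only [ScalesSingle, transpose_eq_single, or_comm] using
    (hsupp hik hbi).exists_eq_single (hsupp hjk hbj)
    hik.symm hjk.symm hij (h.map_single_mul_self hik hbi) (h.map_single_mul_self hjk hbj)
    (h.map_single_ne_zero hbi) (h.map_single_ne_zero hbj) hcomm

theorem not_scalesSingle_transpose (h : FixesDiagonal b φ) (hij : i ≠ j) (hb : b i ≤ b j)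
    (hφ : ScalesSingle φ i j) : ¬ ScalesSingle (fun X => (φ X)ᵀ) i j := by
  rintro ⟨c, hc⟩
  obtain ⟨d, hd⟩ := hφ
  have hd₀ : d = 0 := by simpa [hd, hij] using congrFun₂ hc j i
  exact h.map_single_ne_zero hb (by rw [hd, hd₀, single_zero])

end FixesDiagonal
end FixesDiagonal

section ScalesMatrixUnits

variable {ι α : Type*} [DecidableEq ι] [LinearOrder α] {b : ι → α} {i j k : ι}

theorem blockTriangular_single_add_single (hb : b i ≤ b j) (a : ℂ) :
    (single i i 1 + single i j a).BlockTriangular b :=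
  (blockTriangular_single le_rfl _).add (blockTriangular_single hb _)

variable [Fintype ι]

theorem isIdempotentElem_single_add_single (hij : i ≠ j) (a : ℂ) :
    IsIdempotentElem (single i i 1 + single i j a) := by
  simp [IsIdempotentElem, add_mul, mul_add, hij.symm]

theorem isIdempotentElem_single_sub_single (hij : i ≠ j) (a : ℂ) :
    IsIdempotentElem (single j j 1 - single i j a) := by
  simp [IsIdempotentElem, sub_mul, mul_sub, hij.symm]

variable {φ : Matrix ι ι ℂ → Matrix ι ι ℂ}

/-- A preserver which is the identity on diagonal matrices and maps each matrix unit to a multiple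
of itself, rather than of its transpose. -/
structure ScalesMatrixUnits (b : ι → α) (φ : Matrix ι ι ℂ → Matrix ι ι ℂ) : Prop
    extends FixesDiagonal b φ where
  scalesSingle {i j : ι} : b i ≤ b j → ScalesSingle φ i j

theorem FixesDiagonal.scalesSingle_or (h : FixesDiagonal b φ) (hι : 3 ≤ ENat.card ι) (hij : i ≠ j)
    (hb : b i ≤ b j) : ScalesSingle φ i j ∨ ScalesSingle (fun X => (φ X)ᵀ) i j := by
  obtain ⟨k, hki, hkj⟩ := ENat.exists_ne_ne_of_three_le hι i j
  rcases le_total (b i) (b k) with hik | hki'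
  · exact (h.scalesSingle_of_row hij hki.symm hkj.symm hb hik).imp And.left And.left
  · exact (h.scalesSingle_of_column hij hkj hki.symm hb (hki'.trans hb)).imp And.left And.left

theorem FixesDiagonal.scalesMatrixUnits (h : FixesDiagonal b φ)
    (hφ : ∀ i j, i ≠ j → b i ≤ b j → ScalesSingle φ i j) : ScalesMatrixUnits b φ where
  toFixesDiagonal := h
  scalesSingle {i j} hb := by
    rcases eq_or_ne i j with rfl | hij
    · exact ⟨1, h.map_single_self i 1⟩
    · exact hφ i j hij hb

theorem FixesDiagonal.scalesMatrixUnits_or (h : FixesDiagonal b φ) (hι : 3 ≤ ENat.card ι) :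
    ScalesMatrixUnits b φ ∨ ScalesMatrixUnits b fun X => (φ X)ᵀ := by
  obtain ⟨q, hq⟩ := forall_iff_of_rows_of_columns (b := b) (p := ScalesSingle φ) hι
    (fun i j k hij hik hbj hbk => by
      rcases eq_or_ne j k with rfl | hjk
      · rfl
      · rcases h.scalesSingle_of_row hij hik hjk hbj hbk with ⟨hj, hk⟩ | ⟨hj, hk⟩
        · exact iff_of_true hj hk
        · exact iff_of_false (h.not_scalesSingle_transpose hij hbj · hj)
            (h.not_scalesSingle_transpose hik hbk · hk))
    (fun i j k hik hjk hbi hbj => by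
      rcases eq_or_ne i j with rfl | hij
      · rfl
      · rcases h.scalesSingle_of_column hik hjk hij hbi hbj with ⟨hi, hj⟩ | ⟨hi, hj⟩
        · exact iff_of_true hi hj
        · exact iff_of_false (h.not_scalesSingle_transpose hik hbi · hi)
            (h.not_scalesSingle_transpose hjk hbj · hj))
  by_cases hq' : q
  · exact Or.inl (h.scalesMatrixUnits fun i j hij hb => (hq i j hij hb).2 hq')
  · exact Or.inr (h.transpose.scalesMatrixUnits fun i j hij hb =>
      (h.scalesSingle_or hι hij hb).resolve_left (hq' ∘ (hq i j hij hb).1))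

/-- The scalar by which `φ` multiplies the matrix unit at `(i, j)`. -/
def coeff (φ : Matrix ι ι ℂ → Matrix ι ι ℂ) (i j : ι) : ℂ :=
  φ (single i j 1) i j

/-- The `(i, j)` entry of the image of the idempotent with rows `eᵢ + a eⱼ` at `i` and `0`
elsewhere, where `i ≠ j`. -/
def rowCoeff (φ : Matrix ι ι ℂ → Matrix ι ι ℂ) (i j : ι) (a : ℂ) : ℂ :=
  φ (single i i 1 + single i j a) i j

namespace ScalesMatrixUnits

theorem coeff_self (h : ScalesMatrixUnits b φ) (i : ι) : coeff φ i i = 1 := by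
  simp [coeff, h.map_single_self]

theorem map_single (h : ScalesMatrixUnits b φ) (hb : b i ≤ b j) (a : ℂ) :
    φ (single i j a) = single i j (a * coeff φ i j) := by
  obtain ⟨c, hc⟩ := h.scalesSingle hb
  have := h.map_smul (blockTriangular_single hb 1) a
  simpa [coeff, hc] using this

theorem coeff_ne_zero (h : ScalesMatrixUnits b φ) (hb : b i ≤ b j) : coeff φ i j ≠ 0 := fun h₀ =>
  h.map_single_ne_zero hb (by rw [h.map_single hb, h₀, mul_zero, single_zero])

theorem commute_single (h : ScalesMatrixUnits b φ) {X : Matrix ι ι ℂ} (hX : X.BlockTriangular b)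
    (hb : b i ≤ b j) (hcomm : Commute (single i j 1) X) : Commute (single i j 1) (φ X) := by
  have := h.commute (blockTriangular_single hb (coeff φ i j)⁻¹) hX
    (by simpa using hcomm.smul_left (coeff φ i j)⁻¹)
  rwa [h.map_single hb, inv_mul_cancel₀ (h.coeff_ne_zero hb)] at this

theorem map_row_of_le (h : ScalesMatrixUnits b φ) (hij : i ≠ j) (hki : k ≠ i) (hkj : k ≠ j)
    (hb : b i ≤ b j) (hbk : b k ≤ b j) (a : ℂ) :
    φ (single i i 1 + single i j a) = single i i 1 + single i j (rowCoeff φ i j a) := by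
  have hP := blockTriangular_single_add_single hb a
  have hidem := isIdempotentElem_single_add_single hij a
  have hsupp : IsSupportedOn {i, j} (single i i 1 + single i j a) := fun l hl m =>
    have hne : l ≠ i ∧ l ≠ j := by simpa using hl
    by simp [hne.1.symm, hne.2.symm]
  have hcomm := h.commute_single hP hbk <| by
    simp [commute_iff_eq, mul_add, add_mul, hij.symm, hki.symm, hkj.symm]
  have hsupp' := h.isSupportedOn (c := 1) hP (by rw [one_smul, hidem.eq]) (by norm_num) hsupp
  refine h.map_eq_single_add_single hij hP hidem (fun h₀ => ?_) hsupp
    (row_eq_zero_of_commute_single hcomm hij) ?_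
  · simpa [hij.symm] using congrFun₂ h₀ i i
  · rw [← diag_eq_of_commute_single hcomm, (hsupp' k (by simp [hki, hkj]) k).1]

theorem map_column_of_le (h : ScalesMatrixUnits b φ) (hij : i ≠ j) (hki : k ≠ i) (hkj : k ≠ j)
    (hb : b i ≤ b j) (hbk : b i ≤ b k) (a : ℂ) :
    ∃ c, φ (single j j 1 - single i j a) = single j j 1 + single i j c := by
  have hQ : (single j j 1 - single i j a).BlockTriangular b :=
    (blockTriangular_single le_rfl _).sub (blockTriangular_single hb _)
  have hidem := isIdempotentElem_single_sub_single hij a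
  have hsupp : IsSupportedOn {j, i} (single j j 1 - single i j a) := fun l hl m =>
    have hne : l ≠ j ∧ l ≠ i := by simpa using hl
    by simp [hne.1.symm, hne.2.symm]
  have hcomm := h.commute_single hQ hbk <| by
    simp [commute_iff_eq, mul_sub, sub_mul, hij.symm, hki, hkj]
  have hsupp' := h.isSupportedOn (c := 1) hQ (by rw [one_smul, hidem.eq]) (by norm_num) hsupp
  have hji : φ (single j j 1 - single i j a) j i = 0 :=
    col_eq_zero_of_commute_single hcomm hij.symm
  have hii : φ (single j j 1 - single i j a) i i = 0 := by
    rw [diag_eq_of_commute_single hcomm, (hsupp' k (by simp [hki, hkj]) k).1]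
  have hQ₀ : single j j 1 - single i j a ≠ 0 := fun h₀ => by simpa [hij] using congrFun₂ h₀ j j
  have hT := h.transpose.map_eq_single_add_single hij.symm hQ hidem hQ₀ hsupp hji hii
  exact ⟨_, by simpa using congrArg Matrix.transpose hT⟩

/- Either the idempotent itself or its complement in `Eᵢᵢ + Eⱼⱼ` commutes with a matrix unit that
involves a third index. -/
theorem map_row (h : ScalesMatrixUnits b φ) (hι : 3 ≤ ENat.card ι) (hij : i ≠ j) (hb : b i ≤ b j)
    (a : ℂ) :
    φ (single i i 1 + single i j a) = single i i 1 + single i j (rowCoeff φ i j a) := by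
  obtain ⟨k, hki, hkj⟩ := ENat.exists_ne_ne_of_three_le hι i j
  rcases le_total (b k) (b j) with hbk | hbk
  · exact h.map_row_of_le hij hki hkj hb hbk a
  obtain ⟨c, hc⟩ := h.map_column_of_le hij hki hkj hb (hb.trans hbk) a
  have hQ : (single j j 1 - single i j a).BlockTriangular b :=
    (blockTriangular_single le_rfl _).sub (blockTriangular_single hb _)
  have hadd := (h.map_add_and_mul_eq_zero (blockTriangular_single_add_single hb a) hQ (c := 1)
    (isIdempotentElem_single_add_single hij a)
    (by rw [one_smul, (isIdempotentElem_single_sub_single hij a).eq]) (by norm_num)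
    (by simp [add_mul, mul_sub, hij, hij.symm]) (by simp [sub_mul, mul_add, hij.symm])).1
  have hdiag : φ (single i i 1 + single j j 1) = single i i 1 + single j j 1 := by
    simp only [← diagonal_single, diagonal_add, h.map_diagonal]
  rw [add_add_sub_cancel, hdiag, hc] at hadd
  have hφ : φ (single i i 1 + single i j a) = single i i 1 + single i j (-c) := by
    rw [← sub_eq_iff_eq_add.2 hadd, ← single_neg]
    abel
  simp [rowCoeff, hφ, hij]

end ScalesMatrixUnits
end ScalesMatrixUnits

section AsymptoticSlope

variable {𝕜 : Type*} [NontriviallyNormedField 𝕜] {f g h : 𝕜 → 𝕜} {cf cg ch : 𝕜}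

/-- Along every line through the origin `f` grows linearly with slope `c` at infinity. -/
def HasAsymptoticSlope (f : 𝕜 → 𝕜) (c : 𝕜) : Prop :=
  ∀ a, Filter.Tendsto (fun t => t * f (t⁻¹ * a)) (𝓝[≠] 0) (𝓝 (a * c))

theorem HasAsymptoticSlope.neg_comp_neg (hf : HasAsymptoticSlope f cf) :
    HasAsymptoticSlope (fun x => -f (-x)) cf := fun a => by simpa using (hf (-a)).neg

theorem HasAsymptoticSlope.mul_right_eq (hf : HasAsymptoticSlope f cf)
    (hg : HasAsymptoticSlope g cg) (hfg : ∀ a x, f (a * x) = g a * h x) (x : 𝕜) :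
    x * cf = cg * h x := by
  refine tendsto_nhds_unique (hf x) ?_
  simpa [hfg, mul_assoc] using (hg 1).mul_const (h x)

theorem HasAsymptoticSlope.mul_left_eq (hf : HasAsymptoticSlope f cf)
    (hh : HasAsymptoticSlope h ch) (hfg : ∀ a x, f (a * x) = g a * h x) (a : 𝕜) :
    a * cf = g a * ch := by
  rw [mul_comm (g a)]
  exact hf.mul_right_eq hh (fun x y => by rw [mul_comm, hfg, mul_comm]) a

theorem HasAsymptoticSlope.slope_eq_mul (hf : HasAsymptoticSlope f cf)
    (hg : HasAsymptoticSlope g cg) (hh : HasAsymptoticSlope h ch)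
    (hfg : ∀ a x, f (a * x) = g a * h x) : cf = cg * ch := by
  have hlim : Filter.Tendsto (fun _ : 𝕜 => cf) (𝓝[≠] 0) (𝓝 (cg * ch)) := by
    have := (hh 1).const_mul cg
    rw [one_mul] at this
    refine this.congr' ?_
    filter_upwards [self_mem_nhdsWithin] with t (ht : t ≠ 0)
    rw [mul_left_comm, ← hf.mul_right_eq hg hfg, mul_one, mul_inv_cancel_left₀ ht]
  exact tendsto_nhds_unique tendsto_const_nhds hlim

theorem HasAsymptoticSlope.factors_eq_mul_slope (hf : HasAsymptoticSlope f cf)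
    (hg : HasAsymptoticSlope g cg) (hh : HasAsymptoticSlope h ch)
    (hfg : ∀ a x, f (a * x) = g a * h x) (hcg : cg ≠ 0) (hch : ch ≠ 0) :
    (∀ a, g a = a * cg) ∧ ∀ x, h x = x * ch := by
  have hslope := hf.slope_eq_mul hg hh hfg
  refine ⟨fun a => mul_right_cancel₀ hch ?_, fun x => mul_left_cancel₀ hcg ?_⟩
  · rw [← hf.mul_left_eq hh hfg, hslope, mul_assoc]
  · rw [← hf.mul_right_eq hg hfg, hslope, mul_left_comm]

end AsymptoticSlope

section Shear

variable {ι K : Type*} [DecidableEq ι]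

theorem algHom_pi_ext [Finite ι] [CommSemiring K] {A : Type*} [Ring A] [Algebra K A]
    {L L' : (ι → K) →ₐ[K] A} (i : ι)
    (h : ∀ l ≠ i, L (Pi.single l 1) = L' (Pi.single l 1)) : L = L' := by
  have := Fintype.ofFinite ι
  have hi : L (Pi.single i 1) = L' (Pi.single i 1) := by
    have hsum (M : (ι → K) →ₐ[K] A) :
        M (Pi.single i 1) + ∑ l ∈ Finset.univ.erase i, M (Pi.single l 1) = 1 := by
      rw [Finset.add_sum_erase _ (fun l => M (Pi.single l 1)) (Finset.mem_univ i), ← map_sum,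
        ← map_one M]
      exact congrArg M (Finset.univ_sum_single (1 : ι → K))
    have hrest : ∑ l ∈ Finset.univ.erase i, L (Pi.single l 1) =
        ∑ l ∈ Finset.univ.erase i, L' (Pi.single l 1) :=
      Finset.sum_congr rfl fun l hl => h l (Finset.ne_of_mem_erase hl)
    exact add_right_cancel ((hsum L).trans (hrest ▸ (hsum L').symm))
  refine AlgHom.toLinearMap_injective (LinearMap.pi_ext' fun l => LinearMap.ext_ring ?_)
  rcases eq_or_ne l i with rfl | hl
  · exact hi
  · exact h l hl

variable [Fintype ι] [CommRing K] {i j k : ι} {w : ι → K} {hw : w i = 0}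

theorem single_mul_vecMulVec_single (k l : ι) (a : K) :
    single k l a * vecMulVec w (Pi.single i 1) = single k i (a * w l) := by
  ext r c
  rw [mul_vecMulVec, single_mulVec, ← Pi.single, vecMulVec_apply, single_apply]
  grind

theorem vecMulVec_single_mul_single_of_ne (hik : i ≠ k) (l : ι) (a : K) :
    vecMulVec w (Pi.single i 1) * single k l a = 0 := by
  rw [vecMulVec_mul, single_one_vecMul]
  ext r c
  simp [vecMulVec_apply, hik.symm]

theorem conj_columnShear_single (hki : k ≠ i) (l : ι) :
    conj (columnShear i w hw) (single k l 1) = single k l 1 - single k i (w l) := by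
  change (1 + vecMulVec w (Pi.single i 1)) * single k l 1 * (1 - vecMulVec w (Pi.single i 1)) = _
  rw [add_mul, vecMulVec_single_mul_single_of_ne hki.symm, one_mul, add_zero, mul_sub, mul_one,
    single_mul_vecMulVec_single, one_mul]

theorem conj_columnShear_single_self :
    conj (columnShear i w hw) (single i i 1) = single i i 1 + vecMulVec w (Pi.single i 1) := by
  have hleft : vecMulVec w (Pi.single i 1) * single i i 1 = vecMulVec w (Pi.single i 1) := by
    rw [single_eq_single_vecMulVec_single, vecMulVec_mul_vecMulVec]
    simp
  change (1 + vecMulVec w (Pi.single i 1)) * single i i 1 * (1 - vecMulVec w (Pi.single i 1)) = _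
  rw [add_mul, hleft, one_mul, mul_sub, mul_one, sub_eq_self]
  simp [add_mul, vecMulVec_mul_vecMulVec, single_mul_vecMulVec_single, hw]

theorem commute_single_add_single_iff (hik : i ≠ k) (hjk : j ≠ k) {a : K} :
    Commute (single i i 1 + single i j a) (single k k 1 + vecMulVec w (Pi.single k 1)) ↔
      w i + a * w j = 0 := by
  have hmul : (single i i 1 + single i j a) * (single k k 1 + vecMulVec w (Pi.single k 1)) =
      single i k (w i + a * w j) := by
    simp [mul_add, add_mul, single_mul_vecMulVec_single, hik, hjk, single_add]
  have hmul' :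
      (single k k 1 + vecMulVec w (Pi.single k 1)) * (single i i 1 + single i j a) = 0 := by
    simp [mul_add, add_mul, vecMulVec_single_mul_single_of_ne, hik.symm]
  rw [commute_iff_eq, hmul, hmul']
  exact ⟨fun h => by simpa using congrFun₂ h i k, fun h => by rw [h, single_zero]⟩

end Shear

section Cocycle

variable {ι α : Type*} [Fintype ι] [DecidableEq ι] [LinearOrder α] {b : ι → α}
  {φ : Matrix ι ι ℂ → Matrix ι ι ℂ} {i j k : ι} {w w' : ι → ℂ}

theorem FixesDiagonal.map_conj_columnShear (h : FixesDiagonal b φ) {hw : w i = 0} {hw' : w' i = 0}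
    (hwb : ∀ l, b i < b l → w l = 0)
    (hrow : ∀ l ≠ i, φ (single l l 1 - single l i (w l)) = single l l 1 - single l i (w' l))
    (d : ι → ℂ) :
    φ (conj (columnShear i w hw) (diagonal d)) = conj (columnShear i w' hw') (diagonal d) := by
  obtain ⟨L, hL⟩ := h.exists_algHom_apply_conj_diagonal (blockTriangular_columnShear (hw := hw) hwb)
  have hLL' : L = (conj (columnShear i w' hw')).toAlgHom.comp (diagonalAlgHom ℂ) := by
    refine algHom_pi_ext i fun l hl => ?_
    rw [← hL, diagonal_single, conj_columnShear_single hl, hrow l hl,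
      ← conj_columnShear_single (hw := hw') hl, ← diagonal_single]
    rfl
  rw [hL, hLL']
  rfl

namespace ScalesMatrixUnits

theorem neg_rowCoeff_neg_mul (h : ScalesMatrixUnits b φ) (hι : 3 ≤ ENat.card ι) (hij : i ≠ j)
    (hjk : j ≠ k) (hik : i ≠ k) (hbij : b i ≤ b j) (hbjk : b j ≤ b k) (a c : ℂ) :
    -rowCoeff φ i k (-(a * c)) = rowCoeff φ i j a * rowCoeff φ j k c := by
  have hbik := hbij.trans hbjk
  let w : ι → ℂ := Pi.single i (a * c) + Pi.single j (-c)
  let w' : ι → ℂ := Pi.single i (-rowCoeff φ i k (-(a * c))) + Pi.single j (-rowCoeff φ j k c)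
  have hw : w k = 0 := by simp [w, hik.symm, hjk.symm]
  have hw' : w' k = 0 := by simp [w', hik.symm, hjk.symm]
  have hwb (l : ι) (hl : b k < b l) : w l = 0 := by
    have hli : l ≠ i := by rintro rfl; exact hl.not_ge hbik
    have hlj : l ≠ j := by rintro rfl; exact hl.not_ge hbjk
    simp [w, hli, hlj]
  have hrow (l : ι) (_ : l ≠ k) :
      φ (single l l 1 - single l k (w l)) = single l l 1 - single l k (w' l) := by
    rcases eq_or_ne l i with rfl | hli
    · simpa [w, w', hij, sub_eq_add_neg, single_neg] using h.map_row hι hik hbik (-(a * c))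
    rcases eq_or_ne l j with rfl | hlj
    · simpa [w, w', hli, sub_eq_add_neg, single_neg] using h.map_row hι hjk hbjk c
    · simpa [w, w', hli, hlj] using h.map_single_self l 1
  have hcolumn := h.map_conj_columnShear (hw := hw) (hw' := hw') hwb hrow (Pi.single k 1)
  rw [diagonal_single, conj_columnShear_single_self, conj_columnShear_single_self] at hcolumn
  have hcomm := h.commute (blockTriangular_single_add_single hbij a)
    (conj_columnShear_single_self (hw := hw) ▸ blockTriangular_conj
      (blockTriangular_columnShear hwb) (blockTriangular_single le_rfl _))
    ((commute_single_add_single_iff hik hjk).2 (by simp [w, hij, hij.symm]))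
  rw [h.map_row hι hij hbij, hcolumn, commute_single_add_single_iff hik hjk] at hcomm
  have : -rowCoeff φ i k (-(a * c)) - rowCoeff φ i j a * rowCoeff φ j k c = 0 := by
    simpa [w', hij, hij.symm, sub_eq_add_neg] using hcomm
  exact sub_eq_zero.1 this

theorem hasAsymptoticSlope_rowCoeff (h : ScalesMatrixUnits b φ) (hb : b i ≤ b j) :
    HasAsymptoticSlope (rowCoeff φ i j) (coeff φ i j) := fun a => by
  have hlim := h.tendsto_smul_apply (blockTriangular_single (le_refl (b i)) 1)
    (blockTriangular_single hb a)
  have := (continuous_id.matrix_elem i j).continuousAt.tendsto.comp hlim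
  simpa [Function.comp_def, h.map_single hb, rowCoeff] using this

theorem coeff_mul_and_rowCoeff_eq (h : ScalesMatrixUnits b φ) (hι : 3 ≤ ENat.card ι) (hij : i ≠ j)
    (hjk : j ≠ k) (hik : i ≠ k) (hbij : b i ≤ b j) (hbjk : b j ≤ b k) :
    coeff φ i j * coeff φ j k = coeff φ i k ∧ ∀ a, rowCoeff φ i j a = a * coeff φ i j ∧
      rowCoeff φ j k a = a * coeff φ j k ∧ rowCoeff φ i k a = a * coeff φ i k := by
  have hf := (h.hasAsymptoticSlope_rowCoeff (hbij.trans hbjk)).neg_comp_neg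
  have hg := h.hasAsymptoticSlope_rowCoeff hbij
  have hh := h.hasAsymptoticSlope_rowCoeff hbjk
  have hfg := h.neg_rowCoeff_neg_mul hι hij hjk hik hbij hbjk
  have hslope := hf.slope_eq_mul hg hh hfg
  obtain ⟨hgl, hhl⟩ :=
    hf.factors_eq_mul_slope hg hh hfg (h.coeff_ne_zero hbij) (h.coeff_ne_zero hbjk)
  refine ⟨hslope.symm, fun a => ⟨hgl a, hhl a, ?_⟩⟩
  have := hfg (-a) 1
  rw [hgl, hhl, mul_one, neg_neg] at this
  rw [hslope]
  linear_combination -this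

theorem map_single_add_single (h : ScalesMatrixUnits b φ) (hι : 3 ≤ ENat.card ι) (hij : i ≠ j)
    (hb : b i ≤ b j) (a : ℂ) :
    φ (single i i 1 + single i j a) = single i i 1 + single i j (a * coeff φ i j) := by
  rw [h.map_row hι hij hb]
  obtain ⟨k, hki, hkj⟩ := ENat.exists_ne_ne_of_three_le hι i j
  congr 2
  rcases le_total (b k) (b i) with hbki | hbik
  · exact ((h.coeff_mul_and_rowCoeff_eq hι hki hij hkj hbki hb).2 a).2.1
  rcases le_total (b k) (b j) with hbkj | hbjk
  · exact ((h.coeff_mul_and_rowCoeff_eq hι hki.symm hkj hij hbik hbkj).2 a).2.2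
  · exact ((h.coeff_mul_and_rowCoeff_eq hι hij hkj.symm hki.symm hb hbjk).2 a).1

/- The matrix units at `(i, j)` and `(j, i)` have no direct relation; a third index links them. -/
theorem coeff_mul_swap (h : ScalesMatrixUnits b φ) (hι : 3 ≤ ENat.card ι) (hij : i ≠ j)
    (hbij : b i ≤ b j) (hbji : b j ≤ b i) : coeff φ i j * coeff φ j i = 1 := by
  obtain ⟨k, hki, hkj⟩ := ENat.exists_ne_ne_of_three_le hι i j
  rcases le_total (b k) (b j) with hbk | hbk
  · have hkij := (h.coeff_mul_and_rowCoeff_eq hι hki hij hkj (hbk.trans hbji) hbij).1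
    have hkji := (h.coeff_mul_and_rowCoeff_eq hι hkj hij.symm hki hbk hbji).1
    refine mul_left_cancel₀ (h.coeff_ne_zero (hbk.trans hbji)) ?_
    rw [← mul_assoc, hkij, hkji, mul_one]
  · have hijk := (h.coeff_mul_and_rowCoeff_eq hι hij hkj.symm hki.symm hbij hbk).1
    have hjik :=
      (h.coeff_mul_and_rowCoeff_eq hι hij.symm hki.symm hkj.symm hbji (hbij.trans hbk)).1
    refine mul_right_cancel₀ (h.coeff_ne_zero (hbij.trans hbk)) ?_
    rw [mul_assoc, hjik, hijk, one_mul]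

theorem coeff_mul (h : ScalesMatrixUnits b φ) (hι : 3 ≤ ENat.card ι) (hbij : b i ≤ b j)
    (hbjk : b j ≤ b k) : coeff φ i j * coeff φ j k = coeff φ i k := by
  rcases eq_or_ne i j with rfl | hij
  · rw [h.coeff_self, one_mul]
  rcases eq_or_ne j k with rfl | hjk
  · rw [h.coeff_self, mul_one]
  rcases eq_or_ne i k with rfl | hik
  · rw [h.coeff_self, h.coeff_mul_swap hι hij hbij hbjk]
  · exact (h.coeff_mul_and_rowCoeff_eq hι hij hjk hik hbij hbjk).1

end ScalesMatrixUnits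
end Cocycle

section FixesMatrixUnits

variable {ι α : Type*} [Fintype ι] [DecidableEq ι] [LinearOrder α] {b : ι → α}
  {φ : Matrix ι ι ℂ → Matrix ι ι ℂ}

/-- A preserver which is normalised to be the identity on diagonal matrices and on all block
triangular matrix units. -/
structure FixesMatrixUnits (b : ι → α) (φ : Matrix ι ι ℂ → Matrix ι ι ℂ) : Prop
    extends FixesDiagonal b φ where
  map_single_one {i j : ι} : b i ≤ b j → φ (single i j 1) = single i j 1

theorem ScalesMatrixUnits.exists_fixesMatrixUnits (h : ScalesMatrixUnits b φ)
    (hι : 3 ≤ ENat.card ι) :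
    ∃ T : (Matrix ι ι ℂ)ˣ, FixesMatrixUnits b fun X => conj T (φ X) := by
  have : Nonempty ι := (ENat.one_le_card_iff_nonempty ι).1 ((by norm_num : (1 : ℕ∞) ≤ 3).trans hι)
  obtain ⟨m, hm⟩ := Finite.exists_min b
  let δ (i : ι) : ℂ := coeff φ m i
  have hδ (i : ι) : δ i ≠ 0 := h.coeff_ne_zero (hm i)
  let T : (Matrix ι ι ℂ)ˣ :=
    ⟨diagonal δ, diagonal fun i => (δ i)⁻¹, by simp [hδ], by simp [hδ]⟩
  refine ⟨T, ⟨⟨h.toIsPreserver.conj_comp T, fun d => ?_⟩, fun {i j} hb => ?_⟩⟩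
  · rw [h.map_diagonal]
    change diagonal δ * diagonal d * diagonal (fun i => (δ i)⁻¹) = diagonal d
    rw [diagonal_mul_diagonal, diagonal_mul_diagonal, diagonal_eq_diagonal_iff]
    exact fun i => by rw [mul_right_comm, mul_inv_cancel₀ (hδ i), one_mul]
  · rw [h.map_single hb]
    change diagonal δ * single i j _ * diagonal (fun i => (δ i)⁻¹) = single i j 1
    have hδj : δ i * coeff φ i j * (δ j)⁻¹ = 1 := by
      rw [h.coeff_mul hι (hm i) hb, mul_inv_cancel₀ (hδ j)]
    ext r c
    rw [mul_diagonal, diagonal_mul]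
    rcases eq_or_ne i r with rfl | hr <;> rcases eq_or_ne j c with rfl | hc <;> simp [*]

variable {i : ι} {w : ι → ℂ} {hw : w i = 0}

theorem conj_columnShear_single_eq_self {k l : ι} (hki : k ≠ i) (hwl : w l = 0) :
    conj (columnShear i w hw) (single k l 1) = single k l 1 := by
  rw [conj_columnShear_single hki, hwl, single_zero, sub_zero]

namespace FixesMatrixUnits

theorem scalesMatrixUnits (h : FixesMatrixUnits b φ) : ScalesMatrixUnits b φ where
  toFixesDiagonal := h.toFixesDiagonal
  scalesSingle hb := ⟨1, h.map_single_one hb⟩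

theorem map_conj_columnShear (h : FixesMatrixUnits b φ) (hι : 3 ≤ ENat.card ι)
    (hwb : ∀ j, b i < b j → w j = 0) (d : ι → ℂ) :
    φ (conj (columnShear i w hw) (diagonal d)) = conj (columnShear i w hw) (diagonal d) := by
  refine h.toFixesDiagonal.map_conj_columnShear hwb (fun l hl => ?_) d
  rcases lt_or_ge (b i) (b l) with hbl | hbl
  · simpa [hwb l hbl] using h.map_single_self l 1
  · have hcoeff : coeff φ l i = 1 := by rw [coeff, h.map_single_one hbl, single_apply_same]
    simpa [sub_eq_add_neg, single_neg, hcoeff] using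
      h.scalesMatrixUnits.map_single_add_single hι hl hbl (-w l)

theorem fixesDiagonal_conj_columnShear (h : FixesMatrixUnits b φ) (hι : 3 ≤ ENat.card ι)
    (hwb : ∀ j, b i < b j → w j = 0) : FixesDiagonal b fun X =>
      conj (columnShear i w hw)⁻¹ (φ (conj (columnShear i w hw) X)) where
  toIsPreserver := (h.comp_conj (blockTriangular_columnShear hwb)).conj_comp _
  map_diagonal d := by rw [h.map_conj_columnShear hι hwb, conj_inv_conj]

theorem conj_columnShear_single_of_ne (h : FixesMatrixUnits b φ) {k l : ι} (hki : k ≠ i)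
    (hwl : w l = 0) (hb : b k ≤ b l) :
    conj (columnShear i w hw)⁻¹ (φ (conj (columnShear i w hw) (single k l 1))) =
      single k l 1 := by
  have hfix := conj_columnShear_single_eq_self (hw := hw) hki hwl
  rw [hfix, h.map_single_one hb, ← conj_symm, AlgEquiv.symm_apply_eq, hfix]

theorem scalesMatrixUnits_conj_columnShear (h : FixesMatrixUnits b φ) (hι : 3 ≤ ENat.card ι)
    (hwb : ∀ j, b i < b j → w j = 0) {m : ι} (hmi : m ≠ i) (hb : b m ≤ b i) :
    ScalesMatrixUnits b fun X => conj (columnShear i w hw)⁻¹ (φ (conj (columnShear i w hw) X)) := by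
  have hψ := h.fixesDiagonal_conj_columnShear (hw := hw) hι hwb
  exact (hψ.scalesMatrixUnits_or hι).resolve_right fun hT => hψ.not_scalesSingle_transpose hmi hb
    ⟨1, h.conj_columnShear_single_of_ne hmi hw hb⟩ (hT.scalesSingle hb)

/- The shear fixes the matrix units at `(k, l)` with `k ≠ i` and `w l = 0`; multiplicativity of the
coefficients determines the images of the others. -/
theorem conj_columnShear_of_ne_zero (h : FixesMatrixUnits b φ) (hι : 3 ≤ ENat.card ι)
    (hwb : ∀ j, b i < b j → w j = 0) {m : ι} (hm : w m ≠ 0) : FixesMatrixUnits b fun X =>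
      conj (columnShear i w hw)⁻¹ (φ (conj (columnShear i w hw) X)) := by
  have le_of_ne_zero {l : ι} (hl : w l ≠ 0) : b l ≤ b i := not_lt.1 (hl ∘ hwb l)
  have ne_of_ne_zero {l : ι} (hl : w l ≠ 0) : l ≠ i := by rintro rfl; exact hl hw
  have hmi := ne_of_ne_zero hm
  have hbmi := le_of_ne_zero hm
  have hψ := h.scalesMatrixUnits_conj_columnShear (hw := hw) hι hwb hmi hbmi
  generalize hψ_def : (fun X => conj (columnShear i w hw)⁻¹ (φ (conj (columnShear i w hw) X))) = ψ
    at hψ ⊢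
  have coeff_eq {k l : ι} (hki : k ≠ i) (hwl : w l = 0) (hb : b k ≤ b l) : coeff ψ k l = 1 := by
    have hfix : ψ (single k l 1) = single k l 1 :=
      hψ_def ▸ h.conj_columnShear_single_of_ne hki hwl hb
    rw [coeff, hfix, single_apply_same]
  have coeff_column {k : ι} (hb : b k ≤ b i) : coeff ψ k i = 1 := by
    rcases eq_or_ne k i with rfl | hki
    · exact hψ.coeff_self k
    · exact coeff_eq hki hw hb
  refine ⟨hψ.toFixesDiagonal, fun {k l} hb => ?_⟩
  suffices coeff ψ k l = 1 by rw [hψ.map_single hb, this, mul_one]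
  rcases ne_or_eq (w l) 0 with hl | hwl
  · have hmul := hψ.coeff_mul hι hb (le_of_ne_zero hl)
    rwa [coeff_column (le_of_ne_zero hl), coeff_column (hb.trans (le_of_ne_zero hl)),
      mul_one] at hmul
  rcases eq_or_ne k i with rfl | hki
  · have hmul := hψ.coeff_mul hι hbmi hb
    rwa [coeff_column hbmi, coeff_eq hmi hwl (hbmi.trans hb), one_mul] at hmul
  · exact coeff_eq hki hwl hb

theorem conj_columnShear (h : FixesMatrixUnits b φ) (hι : 3 ≤ ENat.card ι)
    (hwb : ∀ j, b i < b j → w j = 0) : FixesMatrixUnits b fun X =>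
      conj (columnShear i w hw)⁻¹ (φ (conj (columnShear i w hw) X)) := by
  by_cases hw₀ : w = 0
  · have hone : columnShear i w hw = 1 := Units.ext (by simp [columnShear, hw₀])
    simpa [hone, conj_apply] using h
  · obtain ⟨m, hm⟩ := Function.ne_iff.1 hw₀
    exact h.conj_columnShear_of_ne_zero hι hwb hm

theorem apply_eq_self (h : FixesMatrixUnits b φ) (hι : 3 ≤ ENat.card ι) {X : Matrix ι ι ℂ}
    (hX : X.BlockTriangular b) : φ X = X := by
  refine eqOn_blockTriangular h.continuousOn continuousOn_id (fun Y hY hsep => ?_) hX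
  refine blockTriangular_induction
    (motive := fun Y => ∀ φ : Matrix ι ι ℂ → Matrix ι ι ℂ, FixesMatrixUnits b φ → φ Y = Y)
    (fun d φ hφ => hφ.map_diagonal d) (fun i w hw hwb Z _ ih φ hφ => ?_) hY hsep φ h
  exact (conj (columnShear i w hw)).symm_apply_eq.1 (ih _ (hφ.conj_columnShear hι hwb))

end FixesMatrixUnits
end FixesMatrixUnits

section Classification

variable {ι α : Type*} [Fintype ι] [DecidableEq ι] [LinearOrder α] {b : ι → α}
  {φ : Matrix ι ι ℂ → Matrix ι ι ℂ}

theorem exists_transpose_conj_eq {K : Type*} [CommRing K] (T : (Matrix ι ι K)ˣ) :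
    ∃ S : (Matrix ι ι K)ˣ, ∀ X, (conj T X)ᵀ = conj S Xᵀ := by
  refine ⟨⟨T⁻¹.valᵀ, T.valᵀ, ?_, ?_⟩, fun X => ?_⟩
  · rw [← transpose_mul, Units.mul_inv, transpose_one]
  · rw [← transpose_mul, Units.inv_mul, transpose_one]
  · rw [conj_apply, transpose_mul, transpose_mul, ← mul_assoc]
    rfl

theorem ScalesMatrixUnits.exists_eq_conj (h : ScalesMatrixUnits b φ) (hι : 3 ≤ ENat.card ι) :
    ∃ T : (Matrix ι ι ℂ)ˣ, ∀ X, X.BlockTriangular b → φ X = conj T X := by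
  obtain ⟨T, hT⟩ := h.exists_fixesMatrixUnits hι
  exact ⟨T⁻¹, fun X hX => (conj T).eq_symm_apply.2 (hT.apply_eq_self hι hX)⟩

theorem FixesDiagonal.exists_eq_conj (h : FixesDiagonal b φ) (hι : 3 ≤ ENat.card ι) :
    ∃ T : (Matrix ι ι ℂ)ˣ, (∀ X, X.BlockTriangular b → φ X = conj T X) ∨
      ∀ X, X.BlockTriangular b → φ X = conj T Xᵀ := by
  rcases h.scalesMatrixUnits_or hι with hφ | hφ
  · obtain ⟨T, hT⟩ := hφ.exists_eq_conj hι
    exact ⟨T, Or.inl hT⟩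
  · obtain ⟨T, hT⟩ := hφ.exists_eq_conj hι
    obtain ⟨S, hS⟩ := exists_transpose_conj_eq T
    exact ⟨S, Or.inr fun X hX => by rw [← hS, ← hT X hX, transpose_transpose]⟩

theorem IsPreserver.exists_eq_conj (h : IsPreserver b φ) (hι : 3 ≤ ENat.card ι) :
    ∃ T : (Matrix ι ι ℂ)ˣ, (∀ X, X.BlockTriangular b → φ X = conj T X) ∨
      ∀ X, X.BlockTriangular b → φ X = conj T Xᵀ := by
  obtain ⟨R, hR⟩ := h.exists_apply_diagonal_eq_conj
  have hdiag : FixesDiagonal b fun X => conj R⁻¹ (φ X) :=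
    ⟨h.conj_comp R⁻¹, fun d => by rw [hR, conj_inv_conj]⟩
  obtain ⟨T, hT⟩ := hdiag.exists_eq_conj hι
  have hRT {X Y : Matrix ι ι ℂ} (hXY : conj R⁻¹ X = conj T Y) : X = conj (R * T) Y := by
    rw [← conj_conj_inv R X, hXY]
    simp [CommutativityPreserver.conj_apply, mul_assoc]
  exact ⟨R * T, hT.imp (fun hT X hX => hRT (hT X hX)) fun hT X hX => hRT (hT X hX)⟩

end Classification

end CommutativityPreserver

open CommutativityPreserver

theorem main_result_general {ι α : Type*} [Fintype ι] [DecidableEq ι] [LinearOrder α]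
    (hι : 3 ≤ Fintype.card ι) (b : ι → α) (φ : Matrix ι ι ℂ → Matrix ι ι ℂ)
    (hcont : ContinuousOn φ {X | X.BlockTriangular b})
    (hinj : Set.InjOn φ {X | X.BlockTriangular b})
    (hcomm : ∀ X, X.BlockTriangular b → ∀ Y, Y.BlockTriangular b →
      X * Y = Y * X → φ X * φ Y = φ Y * φ X)
    (hspec : ∀ X, X.BlockTriangular b → spectrum ℂ (φ X) = spectrum ℂ X) :
    (∃ T : Matrix ι ι ℂ, IsUnit T.det ∧
      ((∀ X, X.BlockTriangular b → φ X = T * X * T⁻¹) ∨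
        (∀ X, X.BlockTriangular b → φ X = T * Xᵀ * T⁻¹))) ∧
    (∀ X, X.BlockTriangular b → ∀ Y, Y.BlockTriangular b → φ (X + Y) = φ X + φ Y) ∧
    (∀ (c : ℂ) (X), X.BlockTriangular b → φ (c • X) = c • φ X) ∧
    (∀ X, X.BlockTriangular b → φ (X * X) = φ X * φ X) := by
  have h : IsPreserver b φ :=
    ⟨hcont, hinj, fun hX hY hXY => hcomm _ hX _ hY hXY, fun hX => hspec _ hX⟩
  obtain ⟨T, hT⟩ := h.exists_eq_conj (by simpa using hι)
  refine ⟨⟨T, T.isUnit.map detMonoidHom, ?_⟩, fun X hX Y hY => ?_,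
    fun c X hX => h.map_smul hX c, fun X hX => h.map_mul_self hX⟩
  · simpa only [conj_apply, coe_units_inv] using hT
  · rcases hT with hT | hT
    · rw [hT X hX, hT Y hY, hT _ (hX.add hY), map_add]
    · rw [hT X hX, hT Y hY, hT _ (hX.add hY), transpose_add, map_add]

theorem main_result {n : ℕ} (hn : 3 ≤ n) (𝒜 : Set (Matrix (Fin n) (Fin n) ℂ))
    (h𝒜 : IsBlockUT n 𝒜)
    (φ : Matrix (Fin n) (Fin n) ℂ → Matrix (Fin n) (Fin n) ℂ)
    (hcont : ContinuousOn φ 𝒜)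
    (hinj : Set.InjOn φ 𝒜)
    (hcomm : ∀ X ∈ 𝒜, ∀ Y ∈ 𝒜, X * Y = Y * X → φ X * φ Y = φ Y * φ X)
    (hspec : ∀ X ∈ 𝒜, spectrum ℂ (φ X) = spectrum ℂ X) :
    (∃ T : Matrix (Fin n) (Fin n) ℂ, IsUnit T.det ∧
      ((∀ X ∈ 𝒜, φ X = T * X * T⁻¹) ∨ (∀ X ∈ 𝒜, φ X = T * Xᵀ * T⁻¹))) ∧
    (∀ X ∈ 𝒜, ∀ Y ∈ 𝒜, φ (X + Y) = φ X + φ Y) ∧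
    (∀ (c : ℂ), ∀ X ∈ 𝒜, φ (c • X) = c • φ X) ∧
    (∀ X ∈ 𝒜, φ (X * X) = φ X * φ X) := by
  obtain ⟨k, -, -, rfl⟩ := h𝒜
  exact main_result_general (by simpa using hn) (fun i : Fin n => blockIdx k i) φ
    hcont hinj hcomm hspec
end
end
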